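/- arXiv:1401.6252 — 2 statements merged into one kernel-verified Lean document; each statement's English description precedes it below -/
import Mathlib

section
/- There are at least three pairwise inequivalent extremal Type II Z4-codes of length 56, i.e., at least three pairwise inequivalent self-dual Z4-codes of length 56 in which every Euclidean weight is divisible by 8 and whose minimum Euclidean weight is 24. -/
open Finset

namespace Z4Note

variable {ι : Type*} [Fintype ι]

/-- Hamming weight of a binary vector. -/
def hWt (x : ι → ZMod 2) : ℕ := (Finset.univ.filter fun i => x i ≠ 0).card

/-- Lee value of an element of `ZMod 4`:  0 ↦ 0, 1 ↦ 1, 2 ↦ 2, 3 ↦ 1. -/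
def leeVal (a : ZMod 4) : ℕ := min a.val (4 - a.val)

/-- Lee weight `n₁(x) + 2 n₂(x) + n₃(x)`. -/
def leeWt (x : ι → ZMod 4) : ℕ := ∑ i, leeVal (x i)

/-- Euclidean weight `n₁(x) + 4 n₂(x) + n₃(x)`. -/
def eucWt (x : ι → ZMod 4) : ℕ := ∑ i, (leeVal (x i)) ^ 2

/-- Number of coordinates of `x` equal to `a`. -/
def nCount (a : ZMod 4) (x : ι → ZMod 4) : ℕ := (Finset.univ.filter fun i => x i = a).card

/-- Dual of a `ZMod 4`-code (as a set), w.r.t. the standard inner product. -/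
def dualZ4 (C : Set (ι → ZMod 4)) : Set (ι → ZMod 4) :=
  {x | ∀ y ∈ C, ∑ i, x i * y i = 0}

/-- Dual of a binary code (as a set), w.r.t. the standard inner product. -/
def dual2 (C : Set (ι → ZMod 2)) : Set (ι → ZMod 2) :=
  {x | ∀ y ∈ C, ∑ i, x i * y i = 0}

/-- A `ZMod 4`-code is self-dual if it equals its dual. -/
def SelfDualZ4 (C : Submodule (ZMod 4) (ι → ZMod 4)) : Prop :=
  (C : Set (ι → ZMod 4)) = dualZ4 (C : Set (ι → ZMod 4))

/-- A binary code is self-dual if it equals its dual. -/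
def SelfDual2 (D : Submodule (ZMod 2) (ι → ZMod 2)) : Prop :=
  (D : Set (ι → ZMod 2)) = dual2 (D : Set (ι → ZMod 2))

/-- Coordinatewise reduction modulo 2. -/
def res2 (x : ι → ZMod 4) : ι → ZMod 2 :=
  fun i => ZMod.castHom (by norm_num : (2:ℕ) ∣ 4) (ZMod 2) (x i)

/-- The residue code `C⁽¹⁾ = {c mod 2 : c ∈ C}`. -/
def residue (C : Set (ι → ZMod 4)) : Set (ι → ZMod 2) := res2 '' C

/-- Minimum Lee weight among nonzero codewords. -/
noncomputable def minLee (C : Set (ι → ZMod 4)) : ℕ := sInf {d | ∃ x ∈ C, x ≠ 0 ∧ leeWt x = d}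

/-- Minimum Euclidean weight among nonzero codewords. -/
noncomputable def minEuc (C : Set (ι → ZMod 4)) : ℕ := sInf {d | ∃ x ∈ C, x ≠ 0 ∧ eucWt x = d}

/-- Minimum Hamming weight among nonzero codewords of a binary code. -/
noncomputable def minHam (C : Set (ι → ZMod 2)) : ℕ := sInf {d | ∃ x ∈ C, x ≠ 0 ∧ hWt x = d}

/-- A binary code is doubly even if all weights are divisible by 4. -/
def DoublyEven (C : Set (ι → ZMod 2)) : Prop := ∀ x ∈ C, 4 ∣ hWt x

/-- A binary code is singly even if some codeword has weight not divisible by 4. -/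
def SinglyEven (C : Set (ι → ZMod 2)) : Prop := ∃ x ∈ C, ¬ 4 ∣ hWt x

/-- A self-dual `ZMod 4`-code is Type II if all Euclidean weights are divisible by 8. -/
def TypeII (C : Set (ι → ZMod 4)) : Prop := ∀ x ∈ C, 8 ∣ eucWt x

/-- The doubly even subcode of a binary code. -/
def evenSubcode (D : Set (ι → ZMod 2)) : Set (ι → ZMod 2) := {x ∈ D | 4 ∣ hWt x}

/-- The shadow `S = D₀^⊥ \ D` of a binary code. -/
def shadow (D : Set (ι → ZMod 2)) : Set (ι → ZMod 2) := dual2 (evenSubcode D) \ D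

/-- A binary singly even self-dual code is s-extremal if equality holds in the
Bachoc–Gaborit bound relating the minimum weight of the code and of its shadow. -/
def SExtremal (D : Submodule (ZMod 2) (ι → ZMod 2)) : Prop :=
  SelfDual2 D ∧ SinglyEven (D : Set (ι → ZMod 2)) ∧
  ((¬ (Fintype.card ι % 24 = 22 ∧
        minHam (D : Set (ι → ZMod 2)) = 4 * (Fintype.card ι / 24) + 6)) →
      minHam (shadow (D : Set (ι → ZMod 2))) + 2 * minHam (D : Set (ι → ZMod 2)) =
        Fintype.card ι / 2 + 4) ∧
  ((Fintype.card ι % 24 = 22 ∧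
        minHam (D : Set (ι → ZMod 2)) = 4 * (Fintype.card ι / 24) + 6) →
      minHam (shadow (D : Set (ι → ZMod 2))) + 2 * minHam (D : Set (ι → ZMod 2)) =
        Fintype.card ι / 2 + 8)

/-- Equivalence of `ZMod 4`-codes: coordinate permutation together with sign changes. -/
def Z4Equiv (C C' : Set (ι → ZMod 4)) : Prop :=
  ∃ σ : Equiv.Perm ι, ∃ ε : ι → ZMod 4, (∀ i, ε i = 1 ∨ ε i = -1) ∧
    C' = (fun x => fun i => ε i * x (σ i)) '' C

/-- Covering radius of a binary code. -/
noncomputable def covRad (C : Set (ι → ZMod 2)) : ℕ :=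
  sInf {R | ∀ v : ι → ZMod 2, ∃ c ∈ C, hWt (v - c) ≤ R}

/-- Entry `(i,j)` of the circulant matrix with first row `r`. -/
def circEntry {m : ℕ} (r : Fin m → ZMod 4) (i j : Fin m) : ZMod 4 := r (j - i)

/-- Entry `(i,j)` of the negacirculant matrix with first row `r`. -/
def negaEntry {m : ℕ} (r : Fin m → ZMod 4) (i j : Fin m) : ZMod 4 :=
  if i.val ≤ j.val then r (j - i) else - r (j - i)

/-- The bordered part `B` of the generator matrix of a bordered double circulant code. -/
def bdcB {m : ℕ} (α β γ : ZMod 4) (r : Fin m → ZMod 4) :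
    Fin (m+1) → Fin (m+1) → ZMod 4 :=
  Fin.cases (Fin.cases α fun _ => β) (fun i' => Fin.cases γ fun j' => circEntry r i' j')

/-- Row `i` of the generator matrix `(I | B)` of a bordered double circulant code. -/
def bdcRow {m : ℕ} (α β γ : ZMod 4) (r : Fin m → ZMod 4) (i : Fin (m+1)) :
    (Fin (m+1) ⊕ Fin (m+1)) → ZMod 4 :=
  Sum.elim (fun j => if j = i then 1 else 0) (bdcB α β γ r i)

/-- The bordered double circulant code of length `2(m+1)`. -/
def bdcCode {m : ℕ} (α β γ : ZMod 4) (r : Fin m → ZMod 4) :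
    Submodule (ZMod 4) ((Fin (m+1) ⊕ Fin (m+1)) → ZMod 4) :=
  Submodule.span (ZMod 4) (Set.range (bdcRow α β γ r))

/-- The block matrix `[[A, B], [-Bᵀ, Aᵀ]]` built from negacirculant `A`, `B`. -/
def fourNegaM {n : ℕ} (a b : Fin n → ZMod 4) :
    (Fin n ⊕ Fin n) → (Fin n ⊕ Fin n) → ZMod 4
  | Sum.inl i, Sum.inl j => negaEntry a i j
  | Sum.inl i, Sum.inr j => negaEntry b i j
  | Sum.inr i, Sum.inl j => - negaEntry b j i
  | Sum.inr i, Sum.inr j => negaEntry a j i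

/-- Row `i` of the generator matrix `(I | M)` of a four-negacirculant code. -/
def fourNegaRow {n : ℕ} (a b : Fin n → ZMod 4) (i : Fin n ⊕ Fin n) :
    ((Fin n ⊕ Fin n) ⊕ (Fin n ⊕ Fin n)) → ZMod 4 :=
  Sum.elim (fun j => if j = i then 1 else 0) (fourNegaM a b i)

/-- The four-negacirculant code of length `4n`. -/
def fourNegaCode {n : ℕ} (a b : Fin n → ZMod 4) :
    Submodule (ZMod 4) (((Fin n ⊕ Fin n) ⊕ (Fin n ⊕ Fin n)) → ZMod 4) :=
  Submodule.span (ZMod 4) (Set.range (fourNegaRow a b))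

end Z4Note

/-!
If `M` is a self-orthogonal `ZMod 4`-code with residue code `D`, then `M` together with the words
`2 y` for `y ∈ D^⊥` is self-dual, with residue code `D`. It is Type II if the generators of `M` have
Euclidean weights divisible by 8 and `M` contains the all-one word. A word with nonzero residue has
Euclidean weight at least the minimum weight of `D`, and every other nonzero word at least four
times the minimum weight of `D^⊥`. For length 56 it is therefore enough that `D` has minimum weight
at least 20 and `D^⊥` at least 5: divisibility by 8 raises the bound 20 to 24, which is attained by
`2 y` for a word `y ∈ D^⊥` of weight 6. Equivalent codes have residue codes of the same size, which
distinguishes codes whose residue codes have dimensions 13, 14 and 15.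
-/

namespace Z4Note

variable {ι : Type*}

section Dual

variable [Fintype ι] {R : Type*} [CommRing R]

/-- The dual of a linear code under the standard inner product, as a submodule. -/
def dual (M : Submodule R (ι → R)) : Submodule R (ι → R) :=
  LinearMap.BilinForm.orthogonal (dotProductBilin R R) M

theorem mem_dual {M : Submodule R (ι → R)} {x : ι → R} : x ∈ dual M ↔ ∀ y ∈ M, y ⬝ᵥ x = 0 :=
  Iff.rfl

theorem mem_dual_span_range {κ : Type*} {g : κ → ι → R} {x : ι → R} :
    x ∈ dual (Submodule.span R (Set.range g)) ↔ ∀ i, g i ⬝ᵥ x = 0 := by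
  refine ⟨fun hx i => hx _ (Submodule.subset_span ⟨i, rfl⟩), fun hx y hy => ?_⟩
  change y ∈ LinearMap.ker ((dotProductBilin R R).flip x)
  revert y
  rw [← SetLike.le_def, Submodule.span_le]
  rintro _ ⟨i, rfl⟩
  exact hx i

theorem span_range_le_dual {κ : Type*} {g : κ → ι → R} (hg : ∀ i j, g i ⬝ᵥ g j = 0) :
    Submodule.span R (Set.range g) ≤ dual (Submodule.span R (Set.range g)) := by
  rw [Submodule.span_le]
  rintro _ ⟨j, rfl⟩
  exact mem_dual_span_range.2 fun i => hg i j

theorem dual_dual {K : Type*} [Field K] (D : Submodule K (ι → K)) : dual (dual D) = D := by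
  have refl : (dotProductBilin K K : LinearMap.BilinForm K (ι → K)).IsRefl := fun x y h =>
    (dotProduct_comm y x).trans h
  have nondeg : (dotProductBilin K K : LinearMap.BilinForm K (ι → K)).Nondegenerate :=
    refl.nondegenerate_iff_separatingLeft.2 fun x => dotProduct_eq_zero x
  exact LinearMap.BilinForm.orthogonal_orthogonal nondeg refl D

theorem selfDualZ4_iff {C : Submodule (ZMod 4) (ι → ZMod 4)} : SelfDualZ4 C ↔ dual C = C := by
  have h : dualZ4 (C : Set (ι → ZMod 4)) = dual C :=
    Set.ext fun x => forall₂_congr fun y _ => by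
      rw [dotProductBilin_apply_apply, dotProduct_comm, dotProduct]
  rw [SelfDualZ4, h, SetLike.coe_set_eq, eq_comm]

end Dual

section Reduction

/-- The ring homomorphism `ZMod 4 → ZMod 2` underlying `res2`. -/
abbrev mod2 : ZMod 4 →+* ZMod 2 := ZMod.castHom (by norm_num) (ZMod 2)

instance : RingHomSurjective mod2 := ⟨ZMod.castHom_surjective _⟩

/-- Reduction modulo 2 as a semilinear map. -/
def reduction : (ι → ZMod 4) →ₛₗ[mod2] (ι → ZMod 2) where
  toFun := res2
  map_add' x y := funext fun i => map_add _ (x i) (y i)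
  map_smul' c x := funext fun i => map_mul _ c (x i)

theorem reduction_one : reduction (1 : ι → ZMod 4) = 1 :=
  funext fun _ => map_one mod2

theorem map_reduction_span {κ : Type*} (g : κ → ι → ZMod 4) :
    (Submodule.span (ZMod 4) (Set.range g)).map reduction =
      Submodule.span (ZMod 2) (Set.range fun i => reduction (g i)) := by
  rw [Submodule.map_span, ← Set.range_comp, Function.comp_def]

/-- Multiplication by 2, as the embedding of `ZMod 2` into `ZMod 4`. -/
def double : ZMod 2 →+ ZMod 4 where
  toFun a := 2 * a.cast
  map_zero' := by decide
  map_add' := by decide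

theorem double_injective : Function.Injective double := by decide

theorem reduction_double (y : ι → ZMod 2) : reduction (double ∘ y) = 0 :=
  funext fun i => (by decide : ∀ b, mod2 (double b) = 0) (y i)

theorem exists_double_of_reduction_eq_zero {x : ι → ZMod 4} (hx : reduction x = 0) :
    ∃ y : ι → ZMod 2, x = double ∘ y := by
  have half : ∀ a, mod2 a = 0 → ∃ b, a = double b := by decide
  choose y hy using fun i => half (x i) (congrFun hx i)
  exact ⟨y, funext hy⟩

variable [Fintype ι]

theorem dotProduct_double (x : ι → ZMod 4) (y : ι → ZMod 2) :
    x ⬝ᵥ double ∘ y = double (reduction x ⬝ᵥ y) := by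
  have double_mul : ∀ a b, a * double b = double (mod2 a * b) := by decide
  simp only [dotProduct, map_sum]
  exact sum_congr rfl fun i _ => double_mul (x i) (y i)

theorem dotProduct_eq_zero_of_reduction_eq_zero {x y : ι → ZMod 4} (hx : reduction x = 0)
    (hy : reduction y = 0) : x ⬝ᵥ y = 0 := by
  obtain ⟨z, rfl⟩ := exists_double_of_reduction_eq_zero hy
  rw [dotProduct_double, hx, zero_dotProduct, map_zero]

theorem double_mem_dual_iff {M : Submodule (ZMod 4) (ι → ZMod 4)} {y : ι → ZMod 2} :
    double ∘ y ∈ dual M ↔ y ∈ dual (M.map reduction) := by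
  simp only [mem_dual, Submodule.mem_map, forall_exists_index, and_imp,
    forall_apply_eq_imp_iff₂, dotProduct_double, map_eq_zero_iff _ double_injective]

end Reduction

section Weights

variable [Fintype ι]

theorem hWt_zero : hWt (0 : ι → ZMod 2) = 0 := by
  simp [hWt]

theorem eucWt_zero : eucWt (0 : ι → ZMod 4) = 0 := by
  simp [eucWt, leeVal]

theorem sum_eq_hWt (y : ι → ZMod 2) : ∑ i, y i = (hWt y : ZMod 2) := by
  have h : ∀ a : ZMod 2, a = if a ≠ 0 then 1 else 0 := by decide
  rw [hWt, natCast_card_filter]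
  exact sum_congr rfl fun i _ => h (y i)

theorem eucWt_double (y : ι → ZMod 2) : eucWt (double ∘ y) = 4 * hWt y := by
  have h : ∀ a, leeVal (double a) ^ 2 = 4 * if a ≠ 0 then 1 else 0 := by decide
  rw [hWt, card_filter, mul_sum]
  exact sum_congr rfl fun i _ => h (y i)

theorem hWt_reduction_le_eucWt (x : ι → ZMod 4) : hWt (reduction x) ≤ eucWt x := by
  have h : ∀ a : ZMod 4, (if mod2 a ≠ 0 then 1 else 0) ≤ leeVal a ^ 2 := by decide
  rw [hWt, card_filter]
  exact sum_le_sum fun i _ => h (x i)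

theorem eucWt_smul_modEq (c : ZMod 4) (x : ι → ZMod 4) :
    eucWt (c • x) ≡ c.val ^ 2 * eucWt x [MOD 8] := by
  have h : ∀ a b : ZMod 4, leeVal (a * b) ^ 2 ≡ a.val ^ 2 * leeVal b ^ 2 [MOD 8] := by decide
  rw [eucWt, eucWt, mul_sum]
  exact Nat.ModEq.sum fun i _ => h c (x i)

theorem eucWt_add_modEq (x y : ι → ZMod 4) :
    eucWt (x + y) ≡ eucWt x + eucWt y + 2 * ∑ i, (x i * y i).val [MOD 8] := by
  have h : ∀ a b : ZMod 4,
      leeVal (a + b) ^ 2 ≡ leeVal a ^ 2 + leeVal b ^ 2 + 2 * (a * b).val [MOD 8] := by decide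
  simp only [eucWt, mul_sum, ← sum_add_distrib]
  exact Nat.ModEq.sum fun i _ => h (x i) (y i)

theorem eight_dvd_eucWt_add {x y : ι → ZMod 4} (hx : 8 ∣ eucWt x) (hy : 8 ∣ eucWt y)
    (hxy : x ⬝ᵥ y = 0) : 8 ∣ eucWt (x + y) := by
  have four_dvd : 4 ∣ ∑ i, (x i * y i).val := by
    rw [← ZMod.natCast_eq_zero_iff, Nat.cast_sum]
    simpa only [ZMod.natCast_zmod_val, dotProduct] using hxy
  rw [(eucWt_add_modEq x y).dvd_iff dvd_rfl]
  exact (hx.add hy).add (Nat.mul_dvd_mul_left 2 four_dvd)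

theorem eight_dvd_eucWt_of_mem_span_range {κ : Type*} {g : κ → ι → ZMod 4}
    (hg : ∀ i j, g i ⬝ᵥ g j = 0) (hwt : ∀ i, 8 ∣ eucWt (g i)) {x : ι → ZMod 4}
    (hx : x ∈ Submodule.span (ZMod 4) (Set.range g)) : 8 ∣ eucWt x := by
  induction hx using Submodule.span_induction with
  | mem x hx => obtain ⟨i, rfl⟩ := hx; exact hwt i
  | zero => rw [eucWt_zero]; exact dvd_zero 8
  | add x y hx hy ihx ihy =>
    exact eight_dvd_eucWt_add ihx ihy (span_range_le_dual hg hy x hx)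
  | smul c x _ ih => exact ((eucWt_smul_modEq c x).dvd_iff dvd_rfl).2 (ih.mul_left _)

end Weights

section SelfDualExtension

variable [Fintype ι] {M : Submodule (ZMod 4) (ι → ZMod 4)}

/-- The code obtained from `M` by adjoining all words of `2 (ZMod 4) ^ ι` orthogonal to `M`. -/
def evenExtension (M : Submodule (ZMod 4) (ι → ZMod 4)) : Submodule (ZMod 4) (ι → ZMod 4) :=
  M ⊔ dual M ⊓ LinearMap.ker reduction

theorem mem_evenExtension {x : ι → ZMod 4} :
    x ∈ evenExtension M ↔ ∃ m ∈ M, ∃ e ∈ dual M, reduction e = 0 ∧ m + e = x := by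
  simp only [evenExtension, Submodule.mem_sup, Submodule.mem_inf, LinearMap.mem_ker, and_assoc]

theorem map_reduction_evenExtension : (evenExtension M).map reduction = M.map reduction := by
  rw [evenExtension, Submodule.map_sup, sup_eq_left]
  exact (Submodule.map_mono inf_le_right).trans <| (Submodule.map_le_iff_le_comap.2 le_rfl).trans
    bot_le

theorem evenExtension_le_dual (hM : M ≤ dual M) : evenExtension M ≤ dual (evenExtension M) := by
  intro x hx y hy
  obtain ⟨m, hm, e, he, he0, rfl⟩ := mem_evenExtension.1 hx
  obtain ⟨m', hm', e', he', he0', rfl⟩ := mem_evenExtension.1 hy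
  change (m' + e') ⬝ᵥ (m + e) = 0
  rw [add_dotProduct, dotProduct_add, dotProduct_add, mem_dual.1 (hM hm) m' hm',
    mem_dual.1 he m' hm', dotProduct_comm e' m, mem_dual.1 he' m hm,
    dotProduct_eq_zero_of_reduction_eq_zero he0' he0]
  simp only [add_zero]

theorem dual_evenExtension_le (hM : M ≤ dual M) : dual (evenExtension M) ≤ evenExtension M := by
  intro x hx
  have reduction_mem : reduction x ∈ M.map reduction := by
    rw [← dual_dual (M.map reduction), mem_dual]
    intro y hy
    have double_mem : double ∘ y ∈ evenExtension M :=
      mem_evenExtension.2 ⟨0, M.zero_mem, _, double_mem_dual_iff.2 hy, reduction_double y,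
        zero_add _⟩
    apply double_injective
    rw [map_zero, dotProduct_comm, ← dotProduct_double, dotProduct_comm, mem_dual.1 hx _ double_mem]
  obtain ⟨m, hm, hmx⟩ := reduction_mem
  refine mem_evenExtension.2 ⟨m, hm, x - m, ?_, ?_, add_sub_cancel m x⟩
  · exact sub_mem (mem_dual.2 fun z hz => mem_dual.1 hx z (Submodule.mem_sup_left hz)) (hM hm)
  · rw [map_sub, hmx, sub_self]

theorem selfDualZ4_evenExtension (hM : M ≤ dual M) : SelfDualZ4 (evenExtension M) :=
  selfDualZ4_iff.2 ((dual_evenExtension_le hM).antisymm (evenExtension_le_dual hM))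

theorem typeII_evenExtension (hwt : ∀ m ∈ M, 8 ∣ eucWt m) (hone : 1 ∈ M) :
    TypeII (evenExtension M : Set (ι → ZMod 4)) := by
  intro x hx
  obtain ⟨m, hm, e, he, he0, rfl⟩ := mem_evenExtension.1 hx
  obtain ⟨y, rfl⟩ := exists_double_of_reduction_eq_zero he0
  have even_hWt : 2 ∣ hWt y := by
    have hy := mem_dual.1 (double_mem_dual_iff.1 he) _ (Submodule.mem_map_of_mem hone)
    rw [reduction_one, one_dotProduct, sum_eq_hWt] at hy
    exact (ZMod.natCast_eq_zero_iff _ _).1 hy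
  refine eight_dvd_eucWt_add (hwt m hm) ?_ (mem_dual.1 he m hm)
  rw [eucWt_double]
  exact Nat.mul_dvd_mul_left 4 even_hWt

theorem le_eucWt_of_mem_evenExtension (hM : M ≤ dual M) {d : ℕ}
    (hres : ∀ z ∈ M.map reduction, z ≠ 0 → d ≤ hWt z)
    (hdual : ∀ y ∈ dual (M.map reduction), y ≠ 0 → d ≤ 4 * hWt y)
    {x : ι → ZMod 4} (hx : x ∈ evenExtension M) (hx0 : x ≠ 0) : d ≤ eucWt x := by
  by_cases h : reduction x = 0
  · obtain ⟨y, rfl⟩ := exists_double_of_reduction_eq_zero h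
    rw [eucWt_double]
    refine hdual y (double_mem_dual_iff.1 (sup_le hM inf_le_left hx)) ?_
    rintro rfl
    exact hx0 (funext fun _ => map_zero double)
  · refine (hres _ ?_ h).trans (hWt_reduction_le_eucWt x)
    rw [← map_reduction_evenExtension]
    exact Submodule.mem_map_of_mem hx

theorem residue_evenExtension :
    residue (evenExtension M : Set (ι → ZMod 4)) = M.map reduction := by
  rw [← map_reduction_evenExtension]
  rfl

end SelfDualExtension

section Equivalence

theorem Z4Equiv.ncard_residue_eq {C C' : Set (ι → ZMod 4)} (h : Z4Equiv C C') :
    (residue C').ncard = (residue C).ncard := by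
  obtain ⟨σ, ε, hε, rfl⟩ := h
  have mod2_unit_mul : ∀ u a : ZMod 4, u = 1 ∨ u = -1 → mod2 (u * a) = mod2 a := by decide
  have residue_image : residue ((fun x i => ε i * x (σ i)) '' C) = (· ∘ σ) '' residue C := by
    rw [residue, residue, Set.image_image, Set.image_image]
    exact Set.image_congr fun x _ => funext fun i => mod2_unit_mul _ _ (hε i)
  rw [residue_image, Set.ncard_image_of_injective _ σ.surjective.injective_comp_right]

end Equivalence

section BinaryCodes

theorem two_mul_lt_hWt_of_injOn [Fintype ι] {V : Type*} [AddCommGroup V] [Module (ZMod 2) V]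
    {h : ι → V} {t : ℕ} (hinj : Set.InjOn (fun s : Finset ι => ∑ j ∈ s, h j) {s | #s ≤ t})
    {y : ι → ZMod 2} (hy : ∑ j, y j • h j = 0) (hy0 : y ≠ 0) : 2 * t < hWt y := by
  classical
  -- A word of weight at most `2 * t` splits into two halves with equal sums of columns.
  by_contra! hle
  set supp : Finset ι := univ.filter fun j => y j ≠ 0 with hsupp
  have sum_supp : ∑ j ∈ supp, h j = 0 := by
    have smul_eq : ∀ a : ZMod 2, ∀ v : V, a • v = if a ≠ 0 then v else 0 := by
      intro a v
      obtain rfl | rfl : a = 0 ∨ a = 1 := by revert a; decide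
      all_goals simp
    rw [← hy, hsupp, sum_filter]
    exact (sum_congr rfl fun j _ => smul_eq _ _).symm
  obtain ⟨s, hs, hcard⟩ : ∃ s ⊆ supp, #s = min t #supp :=
    Finset.exists_subset_card_eq (min_le_right _ _)
  have card_supp : #supp ≤ 2 * t := hle
  have sum_eq : ∑ j ∈ s, h j = ∑ j ∈ supp \ s, h j := by
    rw [← sub_eq_zero, ZModModule.sub_eq_add, add_comm, sum_sdiff hs, sum_supp]
  have hs_eq : s = supp \ s := by
    refine hinj ?_ ?_ sum_eq
    · exact hcard.trans_le (min_le_left _ _)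
    · rw [Set.mem_ofPred_eq, card_sdiff_of_subset hs]
      omega
  have supp_empty : supp = ∅ := by
    have s_empty : s = ∅ := by
      have disj : Disjoint s (supp \ s) := disjoint_sdiff
      rwa [← hs_eq, disjoint_self] at disj
    rw [s_empty, sdiff_empty] at hs_eq
    exact hs_eq.symm
  exact hy0 (funext fun j => not_not.1 (filter_eq_empty_iff.1 supp_empty (mem_univ j)))

end BinaryCodes

section ExtremalGenerators

variable [Fintype ι] {κ : Type*} [Fintype κ] {g : κ → ι → ZMod 4}

/-- Finitely checkable conditions on words `g` ensuring that `selfDualCode g` is an extremal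
Type II code. The words `reduction (g i)` are at once the generators of the residue code and the
rows of a parity check matrix of its dual: `sum_column_injOn` says that error patterns of weight at
most 2 have distinct syndromes, so that the dual has minimum weight at least 5. The bound 20
suffices in `le_hWt_sum` because Euclidean weights are divisible by 8. -/
structure ExtremalGenerators (g : κ → ι → ZMod 4) : Prop where
  dotProduct_eq_zero : ∀ i j, g i ⬝ᵥ g j = 0
  eight_dvd_eucWt : ∀ i, 8 ∣ eucWt (g i)
  exists_eq_one : ∃ i, g i = 1
  le_hWt_sum : ∀ c : κ → ZMod 2, c ≠ 0 → 20 ≤ hWt (∑ i, c i • reduction (g i))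
  sum_column_injOn :
    Set.InjOn (fun s : Finset ι => ∑ j ∈ s, fun i => reduction (g i) j) {s | #s ≤ 2}
  exists_hWt_eq_six : ∃ y : ι → ZMod 2, hWt y = 6 ∧ ∀ i, reduction (g i) ⬝ᵥ y = 0

/-- The code generated by the words `g` and all words of `2 (ZMod 4) ^ ι` orthogonal to them; it is
self-dual when the `g i` are pairwise orthogonal and self-orthogonal. -/
def selfDualCode (g : κ → ι → ZMod 4) : Submodule (ZMod 4) (ι → ZMod 4) :=
  evenExtension (Submodule.span (ZMod 4) (Set.range g))

namespace ExtremalGenerators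

theorem selfDualZ4 (hg : ExtremalGenerators g) : SelfDualZ4 (selfDualCode g) :=
  selfDualZ4_evenExtension (span_range_le_dual hg.dotProduct_eq_zero)

theorem typeII (hg : ExtremalGenerators g) : TypeII (selfDualCode g : Set (ι → ZMod 4)) :=
  typeII_evenExtension
    (fun _ => eight_dvd_eucWt_of_mem_span_range hg.dotProduct_eq_zero hg.eight_dvd_eucWt)
    (Submodule.subset_span hg.exists_eq_one)

theorem four_lt_hWt_of_mem_dual (hg : ExtremalGenerators g) {y : ι → ZMod 2}
    (hy : ∀ i, reduction (g i) ⬝ᵥ y = 0) (hy0 : y ≠ 0) : 4 < hWt y := by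
  refine two_mul_lt_hWt_of_injOn hg.sum_column_injOn (funext fun i => ?_) hy0
  simpa only [dotProduct, mul_comm, Finset.sum_apply, Pi.smul_apply, smul_eq_mul,
    Pi.zero_apply] using hy i

theorem twenty_le_eucWt (hg : ExtremalGenerators g) {x : ι → ZMod 4}
    (hx : x ∈ selfDualCode g) (hx0 : x ≠ 0) : 20 ≤ eucWt x := by
  refine le_eucWt_of_mem_evenExtension (span_range_le_dual hg.dotProduct_eq_zero)
    (fun z hz hz0 => ?_) (fun y hy hy0 => ?_) hx hx0
  · rw [map_reduction_span, Submodule.mem_span_range_iff_exists_fun] at hz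
    obtain ⟨c, rfl⟩ := hz
    refine hg.le_hWt_sum c ?_
    rintro rfl
    simp at hz0
  · rw [map_reduction_span, mem_dual_span_range] at hy
    have := hg.four_lt_hWt_of_mem_dual hy hy0
    omega

theorem minEuc_eq (hg : ExtremalGenerators g) :
    minEuc (selfDualCode g : Set (ι → ZMod 4)) = 24 := by
  obtain ⟨y, hwt, hy⟩ := hg.exists_hWt_eq_six
  have double_mem : double ∘ y ∈ selfDualCode g := by
    refine mem_evenExtension.2 ⟨0, zero_mem _, _, ?_, reduction_double y, zero_add _⟩
    rwa [double_mem_dual_iff, map_reduction_span, mem_dual_span_range]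
  have eucWt_eq : eucWt (double ∘ y) = 24 := by rw [eucWt_double, hwt]
  have double_ne : double ∘ y ≠ 0 := by
    intro h
    rw [h, eucWt_zero] at eucWt_eq
    omega
  refine IsLeast.csInf_eq ⟨⟨_, double_mem, double_ne, eucWt_eq⟩, ?_⟩
  rintro _ ⟨x, hx, hx0, rfl⟩
  have := hg.twenty_le_eucWt hx hx0
  have := hg.typeII x hx
  omega

theorem linearIndependent_reduction (hg : ExtremalGenerators g) :
    LinearIndependent (ZMod 2) fun i => reduction (g i) := by
  refine Fintype.linearIndependent_iff.2 fun c hc => ?_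
  by_contra! hne
  obtain ⟨i, hi⟩ := hne
  have := hg.le_hWt_sum c fun h => hi (congrFun h i)
  rw [hc, hWt_zero] at this
  omega

theorem ncard_residue (hg : ExtremalGenerators g) :
    (residue (selfDualCode g : Set (ι → ZMod 4))).ncard = 2 ^ Fintype.card κ := by
  rw [selfDualCode, residue_evenExtension, map_reduction_span, ← Nat.card_coe_set_eq,
    SetLike.coe_sort_coe, Module.natCard_eq_pow_finrank (K := ZMod 2),
    finrank_span_eq_card hg.linearIndependent_reduction, Nat.card_zmod]

theorem card_eq_of_z4Equiv {κ' : Type*} [Fintype κ'] {g' : κ' → ι → ZMod 4}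
    (hg : ExtremalGenerators g) (hg' : ExtremalGenerators g')
    (h : Z4Equiv (selfDualCode g : Set (ι → ZMod 4)) (selfDualCode g')) :
    Fintype.card κ = Fintype.card κ' := by
  have := h.ncard_residue_eq
  rw [hg.ncard_residue, hg'.ncard_residue] at this
  exact (Nat.pow_right_injective le_rfl this).symm

end ExtremalGenerators

end ExtremalGenerators

section PackedVectors

variable {n : ℕ}

/-- The number with base `b` digits `x`. For `b = 2 ^ s` this turns addition of vectors into bitwise
xor, and modulo `b - 1` it is the Hamming weight. -/
def pack (b : ℕ) (x : Fin n → ZMod 2) : ℕ :=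
  Nat.ofDigits b (List.ofFn fun j => (x j).val)

theorem pack_add {s : ℕ} (hs : s ≠ 0) (x y : Fin n → ZMod 2) :
    pack (2 ^ s) (x + y) = pack (2 ^ s) x ^^^ pack (2 ^ s) y := by
  have val_add : ∀ a b : ZMod 2, (a + b).val = a.val ^^^ b.val := by decide
  have val_lt : ∀ a : ZMod 2, a.val < 2 ^ s := fun a =>
    (ZMod.val_lt a).trans_le (Nat.le_self_pow hs 2)
  induction n with
  | zero => simp [pack]
  | succ n ih =>
    have pack_succ : ∀ z : Fin (n + 1) → ZMod 2,
        pack (2 ^ s) z = (z 0).val + 2 ^ s * pack (2 ^ s) fun j => z j.succ := fun z => by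
      rw [pack, List.ofFn_succ, Nat.ofDigits_cons]; rfl
    have pack_div : ∀ z : Fin (n + 1) → ZMod 2,
        pack (2 ^ s) z / 2 ^ s = pack (2 ^ s) fun j => z j.succ := fun z => by
      rw [pack_succ, Nat.add_mul_div_left _ _ (by positivity), Nat.div_eq_of_lt (val_lt _),
        zero_add]
    have pack_mod : ∀ z : Fin (n + 1) → ZMod 2, pack (2 ^ s) z % 2 ^ s = (z 0).val := fun z => by
      rw [pack_succ, Nat.add_mul_mod_self_left, Nat.mod_eq_of_lt (val_lt _)]
    rw [← Nat.div_add_mod (pack (2 ^ s) x ^^^ pack (2 ^ s) y) (2 ^ s), Nat.xor_div_two_pow,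
      Nat.xor_mod_two_pow, pack_div, pack_div, pack_mod, pack_mod, ← val_add, ← ih, pack_succ,
      add_comm]
    rfl

theorem pack_modEq_hWt {b : ℕ} (hb : 1 ≤ b) (x : Fin n → ZMod 2) :
    pack b x ≡ hWt x [MOD b - 1] := by
  have val_eq : ∀ a : ZMod 2, a.val = if a ≠ 0 then 1 else 0 := by decide
  have sum_val : ∑ j, (x j).val = hWt x := by
    rw [hWt, card_filter]
    exact sum_congr rfl fun j _ => val_eq (x j)
  have base : b ≡ 1 [MOD b - 1] := ((Nat.modEq_iff_dvd' hb).2 dvd_rfl).symm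
  rw [← sum_val, ← List.sum_ofFn, ← Nat.ofDigits_one]
  exact Nat.ofDigits_modEq' b 1 _ base _

end PackedVectors

section XorSpan

/-- Whether `p` holds on the coset by `a` of the xor-span of a list of numbers. -/
def cosetForall (p : ℕ → Bool) : List ℕ → ℕ → Bool
  | [], a => p a
  | r :: rs, a => cosetForall p rs a && cosetForall p rs (a ^^^ r)

/-- Whether `p` holds on the xor of every nonempty sublist; branching on the list visits each of the
`2 ^ k - 1` combinations with a single xor. -/
def spanForall (p : ℕ → Bool) : List ℕ → Bool
  | [] => true
  | r :: rs => cosetForall p rs r && spanForall p rs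

variable {V : Type*} [AddCommGroup V] [Module (ZMod 2) V] {p : ℕ → Bool} {f : V → ℕ} {k : ℕ}

theorem of_cosetForall (hf : ∀ x y, f (x + y) = f x ^^^ f y) (v : Fin k → V) (x : V)
    (h : cosetForall p (List.ofFn fun i => f (v i)) (f x)) (c : Fin k → ZMod 2) :
    p (f (x + ∑ i, c i • v i)) := by
  induction k generalizing x with
  | zero => simpa [cosetForall] using h
  | succ k ih =>
    rw [List.ofFn_succ, cosetForall, Bool.and_eq_true, ← hf] at h
    rw [Fin.sum_univ_succ, ← add_assoc]
    obtain hc | hc : c 0 = 0 ∨ c 0 = 1 := by generalize c 0 = a; revert a; decide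
    · rw [hc, zero_smul, add_zero]
      exact ih _ _ h.1 _
    · rw [hc, one_smul]
      exact ih _ _ h.2 _

theorem of_spanForall (hf : ∀ x y, f (x + y) = f x ^^^ f y) (v : Fin k → V)
    (h : spanForall p (List.ofFn fun i => f (v i))) {c : Fin k → ZMod 2} (hc : c ≠ 0) :
    p (f (∑ i, c i • v i)) := by
  induction k with
  | zero => exact absurd (Subsingleton.elim c 0) hc
  | succ k ih =>
    rw [List.ofFn_succ, spanForall, Bool.and_eq_true] at h
    rw [Fin.sum_univ_succ]
    obtain h0 | h0 : c 0 = 0 ∨ c 0 = 1 := by generalize c 0 = a; revert a; decide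
    · rw [h0, zero_smul, zero_add]
      refine ih _ h.2 fun htail => hc (funext (Fin.cases h0 fun i => congrFun htail i))
    · rw [h0, one_smul]
      exact of_cosetForall hf _ _ h.1 _

end XorSpan

theorem le_hWt_sum_of_spanForall {n k s d : ℕ} (hs : s ≠ 0) (v : Fin k → Fin n → ZMod 2)
    (h : spanForall (fun a => d ≤ a % (2 ^ s - 1)) (List.ofFn fun i => pack (2 ^ s) (v i)))
    (c : Fin k → ZMod 2) (hc : c ≠ 0) : d ≤ hWt (∑ i, c i • v i) :=
  calc d ≤ pack (2 ^ s) (∑ i, c i • v i) % (2 ^ s - 1) :=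
        of_decide_eq_true (of_spanForall (pack_add hs) v h hc)
    _ = hWt (∑ i, c i • v i) % (2 ^ s - 1) := pack_modEq_hWt Nat.one_le_two_pow _
    _ ≤ hWt (∑ i, c i • v i) := Nat.mod_le _ _

section Nodup

/-- Whether a list has no duplicates and avoids the set with bitmap `s`. It needs one bit operation
per entry, where deciding `List.Nodup` compares all pairs. -/
def nodupFrom (s : ℕ) : List ℕ → Bool
  | [] => true
  | a :: l => !s.testBit a && nodupFrom (s ||| 2 ^ a) l

theorem nodup_of_nodupFrom {l : List ℕ} {s : ℕ} (h : nodupFrom s l) :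
    (∀ a ∈ l, s.testBit a = false) ∧ l.Nodup := by
  induction l generalizing s with
  | nil => simp
  | cons a l ih =>
    simp only [nodupFrom, Bool.and_eq_true, Bool.not_eq_true'] at h
    obtain ⟨ha, hl⟩ := h
    obtain ⟨hs, hnodup⟩ := ih hl
    simp only [Nat.testBit_or, Bool.or_eq_false_iff, Nat.testBit_two_pow, decide_eq_false_iff_not]
      at hs
    exact ⟨List.forall_mem_cons.2 ⟨ha, fun b hb => (hs b hb).1⟩,
      List.nodup_cons.2 ⟨fun hmem => (hs a hmem).2 rfl, hnodup⟩⟩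

/-- The sublists of `l` of length at most `t`, used to enumerate the error patterns of weight at
most `t`. -/
def shortSublists {α : Type*} (t : ℕ) (l : List α) : List (List α) :=
  (List.range (t + 1)).flatMap fun i => l.sublistsLen i

theorem mem_shortSublists {α : Type*} {t : ℕ} {l l' : List α} :
    l' ∈ shortSublists t l ↔ l'.Sublist l ∧ l'.length ≤ t := by
  simp [shortSublists, List.mem_sublistsLen, and_comm]

variable {V : Type*} [AddCommGroup V] {f : V → ℕ} {n : ℕ}

theorem sum_injOn_of_nodupFrom (hf : ∀ x y, f (x + y) = f x ^^^ f y) (v : Fin n → V) (t : ℕ)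
    (h : nodupFrom 0 ((shortSublists t (List.finRange n)).map fun l =>
      (l.map fun j => f (v j)).foldr (· ^^^ ·) 0)) :
    Set.InjOn (fun s : Finset (Fin n) => ∑ j ∈ s, v j) {s | #s ≤ t} := by
  have f_zero : f 0 = 0 := by simpa using hf 0 0
  have foldr_map : ∀ l : List (Fin n), (l.map fun j => f (v j)).foldr (· ^^^ ·) 0 =
      f (l.map v).sum := fun l => by
    induction l with
    | nil => exact f_zero.symm
    | cons j l ih => rw [List.map_cons, List.foldr_cons, ih, List.map_cons, List.sum_cons, hf]
  simp only [foldr_map] at h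
  have list_inj := List.inj_on_of_nodup_map (nodup_of_nodupFrom h).2
  let toList (s : Finset (Fin n)) : List (Fin n) := (List.finRange n).filter (· ∈ s)
  have toFinset_toList : ∀ s, (toList s).toFinset = s := fun s => by ext; simp [toList]
  have nodup_toList : ∀ s, (toList s).Nodup := fun s => (List.nodup_finRange n).filter _
  have toList_mem : ∀ s : Finset (Fin n), #s ≤ t → toList s ∈ shortSublists t (List.finRange n) :=
    fun s hs => mem_shortSublists.2 ⟨List.filter_sublist, by
      rwa [← List.toFinset_card_of_nodup (nodup_toList s), toFinset_toList]⟩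
  have sum_toList : ∀ s, ((toList s).map v).sum = ∑ j ∈ s, v j := fun s => by
    rw [← List.sum_toFinset v (nodup_toList s), toFinset_toList]
  intro s hs s' hs' hsum
  rw [← toFinset_toList s, ← toFinset_toList s']
  refine congrArg _ (list_inj (toList_mem s hs) (toList_mem s' hs') ?_)
  rw [sum_toList, sum_toList]
  exact congrArg f hsum

end Nodup

section QuasiCyclicGenerators

/-- The word consisting of seven blocks of length 8, each given by its decimal digits, which are
counted from the right. -/
def word (w : Fin 7 → ℕ) : Fin (7 * 8) → ZMod 4 :=
  fun j => (w j.divNat / 10 ^ (j.modNat : ℕ) % 10 : ℕ)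

/-- Cyclic shift by `i` blocks of length 8. -/
def blockShift (i : ℕ) (x : Fin 56 → ZMod 4) : Fin 56 → ZMod 4 :=
  fun j => x (j + Fin.ofNat 56 (8 * i))

/-- Generators of a quasi-cyclic code: the all-one word, words of period 8, and block shifts of the
seeds. The seven shifts of each seed used below sum to zero, so that six of them suffice. -/
def quasiCyclicGenerators (periodic seeds : List (Fin 7 → ℕ)) : List (Fin 56 → ZMod 4) :=
  1 :: periodic.map word ++
    seeds.flatMap fun w => (List.range 6).map fun i => blockShift i (word w)

/-- Generators, found by computer search, whose residue codes have dimensions 13, 14 and 15. -/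
def generators : Fin 3 → List (Fin 56 → ZMod 4) := ![
  quasiCyclicGenerators []
    [![02223302, 12133003, 02122102, 02232102, 13022002, 12122103, 13122202],
     ![22121221, 22230321, 32321221, 22220220, 23221320, 22020231, 33231230]],
  quasiCyclicGenerators [fun _ => 00031121]
    [![31222003, 22223012, 22222112, 23222012, 20332112, 32232103, 22323102],
     ![23120101, 22120121, 22020130, 33030120, 22020011, 22130020, 32120021]],
  quasiCyclicGenerators [fun _ => 00031121, fun _ => 02301011]
    [![20202023, 21202020, 30202131, 30203120, 21302021, 21203122, 21302131],
     ![21233320, 21322130, 22322030, 32323120, 32322020, 22322120, 22332220]]]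

theorem extremalGenerators_generators (m : Fin 3) : ExtremalGenerators (generators m).get where
  dotProduct_eq_zero := by revert m; decide +kernel
  eight_dvd_eucWt := by revert m; decide +kernel
  exists_eq_one := by revert m; decide +kernel
  le_hWt_sum := by
    have h : ∀ m, spanForall (fun a => 20 ≤ a % (2 ^ 6 - 1))
        (List.ofFn fun i => pack (2 ^ 6) (reduction ((generators m).get i))) := by decide +kernel
    exact le_hWt_sum_of_spanForall (by norm_num) _ (h m)
  sum_column_injOn := by
    have h : ∀ m, nodupFrom 0 ((shortSublists 2 (List.finRange 56)).map fun l =>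
        (l.map fun j => pack (2 ^ 1) fun i => reduction ((generators m).get i) j).foldr
          (· ^^^ ·) 0) := by decide +kernel
    exact sum_injOn_of_nodupFrom (pack_add one_ne_zero) _ 2 (h m)
  exists_hWt_eq_six := by
    let support : Fin 3 → List (Fin 56) :=
      ![[0, 1, 2, 5, 7, 45], [0, 1, 2, 3, 7, 27], [0, 1, 3, 7, 37, 47]]
    refine ⟨fun j => if j ∈ support m then 1 else 0, ?_⟩
    revert m
    decide +kernel

end QuasiCyclicGenerators

end Z4Note

open Z4Note in
/-- there are at least three pairwise inequivalent extremal Type II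
`ZMod 4`-codes of length 56. -/
theorem three_inequivalent_extremal_typeII_length56 :
    ∃ Cs : Fin 3 → Submodule (ZMod 4) (Fin 56 → ZMod 4),
      (∀ i, SelfDualZ4 (Cs i) ∧ TypeII ((Cs i : Set (Fin 56 → ZMod 4))) ∧
        minEuc ((Cs i : Set (Fin 56 → ZMod 4))) = 24) ∧
      ∀ i j, i ≠ j →
        ¬ Z4Equiv ((Cs i : Set (Fin 56 → ZMod 4))) ((Cs j : Set (Fin 56 → ZMod 4))) := by
  have hg := extremalGenerators_generators
  have length_injective : Function.Injective fun i => (generators i).length := by decide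
  refine ⟨fun i => selfDualCode (generators i).get,
    fun i => ⟨(hg i).selfDualZ4, (hg i).typeII, (hg i).minEuc_eq⟩, fun i j hij hequiv => hij ?_⟩
  have card_eq := (hg i).card_eq_of_z4Equiv (hg j) hequiv
  rw [Fintype.card_fin, Fintype.card_fin] at card_eq
  exact length_injective card_eq
end

section
/- Let k be a positive integer, let (α,β) be one of (2,2), (4,4), (6,4), (10,4), and let C be a self-dual Z4-code of length 24k+α with minimum Lee weight 8k+β. Then every binary self-dual code containing the residue code C^(1) is an s-extremal self-dual code with minimum Hamming weight 4k+2. -/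
open Finset

/-!
Let `D` be a self-dual code of length `n = 2h` and `T` its shadow. MacWilliams duality over the
doubly even subcode reads
`|D| * ∑ v ∈ T, a ^ (n - wt v) * b ^ wt v =
  ∑ x ∈ D, (-1) ^ (wt x / 2) * (a + b) ^ (n - wt x) * (a - b) ^ wt x`.
Taking `a = 1`, `b = i` shows that all weights in `T` are congruent to `h` modulo 4. Taking
`a = 1 + y`, `b = 1 - y` expresses the weight enumerator of `D`, in the variable `X = -y ^ 2`, as
`(1 - X) ^ h * P (X * u)` for an explicit power series `u`, where the lower `T` starts, the higher
the degree of the polynomial `P` may be. If `D` had no words of weight `4k + 2`, or `T` none of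
weight `n / 2 - 8k`, then `P (X * u)` would agree with `(1 - X) ^ (-h)` to an order exceeding the
degree of `P` by two, and the residue computation behind Lagrange inversion would make a coefficient
of an explicit power series vanish; that coefficient is visibly positive.

That no lighter words occur comes from `C`: a binary vector `v` orthogonal to the residue code lifts
to the word `2v` of `C`, of Lee weight `2 * wt v`. Since the residue code is doubly even, this
applies to the words of both `D` and `T`.
-/

namespace Z4Note

section ResidueCalculus

open PowerSeries

variable {R : Type*} [CommRing R] [IsAddTorsionFree R] {u v : R⟦X⟧}

/- In terms of `f = X * u`, the coefficient below is the residue of `f ^ (r - N - 1) * f'`, which is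
the derivative of a multiple of `f ^ (r - N)`. -/
theorem coeff_pow_mul_derivative_mul_inv_pow (huv : u * v = 1) {r N : ℕ} (hr : r < N) :
    coeff N ((X * u) ^ r * d⁄dX R (X * u) * v ^ (N + 1)) = 0 := by
  obtain ⟨l, rfl⟩ := Nat.exists_eq_add_of_lt hr
  have huvr : u ^ r * v ^ r = 1 := by rw [← mul_pow, huv, one_pow]
  have hdf : d⁄dX R (X * u) = u + X * d⁄dX R u := by
    rw [Derivation.leibniz, derivative_X, smul_eq_mul, smul_eq_mul, mul_one, add_comm]
  have hdv : v * d⁄dX R u = -(u * d⁄dX R v) := by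
    have h := congrArg (d⁄dX R) huv
    rw [Derivation.leibniz, Derivation.map_one_eq_zero, smul_eq_mul, smul_eq_mul] at h
    linear_combination h
  have hexact : (l + 1) • ((X * u) ^ r * d⁄dX R (X * u) * v ^ (r + l + 1 + 1)) =
      X ^ r * ((l + 1) • v ^ (l + 1) - X * d⁄dX R (v ^ (l + 1))) := by
    rw [hdf, derivative_pow, Nat.add_sub_cancel, nsmul_eq_mul, nsmul_eq_mul]
    linear_combination ((l + 1 : ℕ) : R⟦X⟧) * X ^ r * ((u + X * d⁄dX R u) * v ^ (l + 2) * huvr +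
      (v ^ (l + 1) - X * v ^ l * d⁄dX R v) * huv + X * v ^ (l + 1) * hdv)
  refine (nsmul_eq_zero_iff_right l.succ_ne_zero).mp ?_
  rw [← map_nsmul, hexact, add_assoc, add_comm r, coeff_X_pow_mul, map_sub, map_nsmul,
    coeff_succ_X_mul, coeff_derivative, nsmul_eq_mul, mul_comm, Nat.cast_add_one, sub_self]

theorem coeff_derivative_aeval_mul_inv_pow (huv : u * v = 1) {P : Polynomial R} {N : ℕ}
    (hP : P.natDegree ≤ N) :
    coeff N (d⁄dX R (Polynomial.aeval (X * u) P) * v ^ (N + 1)) = 0 := by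
  rw [Derivation.map_aeval, smul_eq_mul, Polynomial.aeval_eq_sum_range, Finset.sum_mul,
    Finset.sum_mul, map_sum]
  refine Finset.sum_eq_zero fun r _ => ?_
  rw [smul_mul_assoc, smul_mul_assoc, coeff_smul]
  rcases lt_or_ge r N with hrN | hNr
  · rw [coeff_pow_mul_derivative_mul_inv_pow huv hrN, smul_zero]
  · rw [Polynomial.coeff_derivative, Polynomial.coeff_eq_zero_of_natDegree_lt (by omega), zero_mul,
      zero_smul]

theorem coeff_derivative_mul_inv_pow_of_dvd_aeval_sub (huv : u * v = 1) {P : Polynomial R} {N : ℕ}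
    (hP : P.natDegree ≤ N) {f : R⟦X⟧} (hf : X ^ (N + 2) ∣ Polynomial.aeval (X * u) P - f) :
    coeff N (d⁄dX R f * v ^ (N + 1)) = 0 := by
  obtain ⟨g, hg⟩ := hf
  have hd : d⁄dX R f * v ^ (N + 1) =
      d⁄dX R (Polynomial.aeval (X * u) P) * v ^ (N + 1) -
        X ^ (N + 1) * ((((N + 2 : ℕ) : R⟦X⟧) * g + X * d⁄dX R g) * v ^ (N + 1)) := by
    rw [show f = Polynomial.aeval (X * u) P - X ^ (N + 2) * g by rw [← hg]; ring, map_sub,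
      Derivation.leibniz, derivative_pow, derivative_X, Nat.add_sub_assoc one_le_two, smul_eq_mul,
      smul_eq_mul]
    ring
  rw [hd, map_sub, coeff_derivative_aeval_mul_inv_pow huv hP, coeff_X_pow_mul', if_neg (by omega),
    sub_zero]

end ResidueCalculus

section GleasonExpansion

open PowerSeries

variable {K : Type*} [Field K]

theorem expand_injective {R : Type*} [CommRing R] {p : ℕ} (hp : p ≠ 0) :
    Function.Injective (expand (R := R) p hp) := by
  intro f g hfg
  ext n
  rw [← coeff_expand_mul p hp, hfg, coeff_expand_mul]

theorem one_sub_X_mul_inv : (1 - X : K⟦X⟧) * (1 - X)⁻¹ = 1 :=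
  PowerSeries.mul_inv_cancel _ (by simp)

theorem one_add_X_mul_inv : (1 + X : K⟦X⟧) * (1 + X)⁻¹ = 1 :=
  PowerSeries.mul_inv_cancel _ (by simp)

theorem expand_two_one_sub_X :
    expand 2 two_ne_zero (1 - X : K⟦X⟧) = (1 - X) * (1 + X) := by
  rw [map_sub, map_one, expand_X]
  ring

theorem expand_two_inv_one_sub_X :
    expand 2 two_ne_zero (1 - X : K⟦X⟧)⁻¹ = (1 - X)⁻¹ * (1 + X)⁻¹ := by
  have h := congrArg (expand 2 two_ne_zero) (one_sub_X_mul_inv (K := K))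
  rw [map_mul, map_one, expand_two_one_sub_X] at h
  linear_combination (1 - X)⁻¹ * (1 + X)⁻¹ * h -
    expand 2 two_ne_zero (1 - X)⁻¹ * one_add_X_mul_inv (K := K) -
    expand 2 two_ne_zero (1 - X)⁻¹ * ((1 + X) * (1 + X)⁻¹) * one_sub_X_mul_inv (K := K)

theorem coeff_inv_one_sub_X_pow_succ_pos (m n : ℕ) :
    0 < coeff n ((1 - X : ℚ⟦X⟧)⁻¹ ^ (m + 1)) := by
  have hinv : (1 - X : ℚ⟦X⟧)⁻¹ = PowerSeries.mk 1 :=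
    (PowerSeries.inv_eq_iff_mul_eq_one (by simp)).mpr (mk_one_mul_one_sub_eq_one ℚ)
  rw [hinv, mk_one_pow_eq_mk_choose_add, coeff_mk, Nat.cast_pos]
  exact Nat.choose_pos (Nat.le_add_right m n)

theorem coeff_one_sub_X_pow_nonneg_of_even (d : ℕ) {n : ℕ} (hn : Even n) :
    0 ≤ coeff n ((1 - X : ℚ⟦X⟧) ^ d) := by
  have hrescale : (1 - X : ℚ⟦X⟧) ^ d = rescale (-1) ((1 + Polynomial.X) ^ d : Polynomial ℚ) := by
    simp [sub_eq_add_neg]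
  rw [hrescale, coeff_rescale, hn.neg_one_pow, one_mul, Polynomial.coeff_coe,
    Polynomial.coeff_one_add_X_pow]
  exact Nat.cast_nonneg _

theorem coeff_expand_mul_pos {R : Type*} [CommRing R] [PartialOrder R] [IsStrictOrderedRing R]
    {p : ℕ} (hp : p ≠ 0) {f g : R⟦X⟧} {i₀ j₀ n : ℕ}
    (hf : ∀ i, 0 < coeff i f) (hg : ∀ i j, p * i + j = n → 0 ≤ coeff j g)
    (hn : p * i₀ + j₀ = n) (hg₀ : 0 < coeff j₀ g) :
    0 < coeff n (expand p hp f * g) := by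
  rw [coeff_mul]
  refine Finset.sum_pos' (fun ij hij => ?_) ⟨(p * i₀, j₀), mem_antidiagonal.mpr hn, ?_⟩
  · by_cases hdvd : p ∣ ij.1
    · obtain ⟨i, hi⟩ := hdvd
      rw [hi, coeff_expand_mul]
      exact mul_nonneg (hf i).le (hg i ij.2 (hi ▸ mem_antidiagonal.mp hij))
    · rw [coeff_expand_of_not_dvd _ _ _ hdvd, zero_mul]
  · rw [coeff_expand_mul]
    exact mul_pos (hf i₀) hg₀

theorem derivative_inv_one_sub_X_pow (h : ℕ) :
    d⁄dX K ((1 - X)⁻¹ ^ h) = h • (1 - X)⁻¹ ^ (h + 1) := by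
  rcases h with _ | h
  · simp
  · rw [derivative_pow, derivative_inv', map_sub, Derivation.map_one_eq_zero, derivative_X,
      Nat.add_sub_cancel, nsmul_eq_mul]
    ring

/-- The unit `u` for which `X * u = X * (1 + X) ^ 2 / (1 - X) ^ 4` is, in the variable `X = -y ^ 2`,
the ratio `-y ^ 2 * (1 - y ^ 2) ^ 2 / (1 + y ^ 2) ^ 4` of the generators of the ring of weight
enumerators in Gleason's theorem. -/
noncomputable def gleasonUnit : ℚ⟦X⟧ := (1 + X) ^ 2 * (1 - X)⁻¹ ^ 4

theorem inv_gleasonUnit : gleasonUnit⁻¹ = (1 - X) ^ 4 * (1 + X)⁻¹ ^ 2 := by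
  rw [PowerSeries.inv_eq_iff_mul_eq_one (by simp [gleasonUnit]), gleasonUnit]
  calc (1 - X : ℚ⟦X⟧) ^ 4 * (1 + X)⁻¹ ^ 2 * ((1 + X) ^ 2 * (1 - X)⁻¹ ^ 4)
      = ((1 - X) * (1 - X)⁻¹) ^ 4 * ((1 + X) * (1 + X)⁻¹) ^ 2 := by ring
    _ = 1 := by rw [one_sub_X_mul_inv, one_add_X_mul_inv, one_pow, one_pow, one_mul]

theorem natDegree_dickson_le {R : Type*} [CommRing R] (m : ℕ) (a : R) (j : ℕ) :
    (Polynomial.dickson m a j).natDegree ≤ j := by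
  induction j using Nat.twoStepInduction with
  | zero =>
    rw [Polynomial.dickson_zero]
    exact (Polynomial.natDegree_sub_le _ _).trans (by simp)
  | one => simpa using Polynomial.natDegree_X_le
  | more j ih₀ ih₁ =>
    rw [Polynomial.dickson_add_two]
    refine (Polynomial.natDegree_sub_le _ _).trans (max_le ?_ ?_)
    · exact Polynomial.natDegree_mul_le.trans (by linarith [Polynomial.natDegree_X_le (R := R)])
    · exact (Polynomial.natDegree_C_mul_le _ _).trans (by omega)

/-- The polynomial expressing `t ^ j + t⁻¹ ^ j` through `z`, where `t + t⁻¹ = 2 + 64 * z`. -/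
noncomputable def gleasonPolynomial (j : ℕ) : Polynomial ℚ :=
  (Polynomial.dickson 1 1 j).comp (2 + 64 * Polynomial.X)

theorem natDegree_gleasonPolynomial_le (j : ℕ) : (gleasonPolynomial j).natDegree ≤ j := by
  have hlin : (2 + 64 * Polynomial.X : Polynomial ℚ).natDegree ≤ 1 := by compute_degree
  calc (gleasonPolynomial j).natDegree
      ≤ (Polynomial.dickson 1 (1 : ℚ) j).natDegree *
          (2 + 64 * Polynomial.X : Polynomial ℚ).natDegree := Polynomial.natDegree_comp_le
    _ ≤ j * 1 := Nat.mul_le_mul (natDegree_dickson_le 1 1 j) hlin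
    _ = j := mul_one j

theorem aeval_gleasonPolynomial {A : Type*} [CommRing A] [Algebra ℚ A] {z t s : A} (hts : t * s = 1)
    (hz : t + s = 2 + 64 * z) (j : ℕ) :
    Polynomial.aeval z (gleasonPolynomial j) = t ^ j + s ^ j := by
  rw [gleasonPolynomial, Polynomial.aeval_comp, ← Polynomial.dickson_one_one_eval_add_inv t s hts,
    hz, ← map_one (algebraMap ℚ A), ← Polynomial.map_dickson, Polynomial.eval_map_algebraMap,
    map_add, map_mul, map_ofNat, map_ofNat, Polynomial.aeval_X]

theorem one_add_X_pow_add_one_sub_X_pow (j : ℕ) :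
    (1 + X : ℚ⟦X⟧) ^ (8 * j) + (1 - X) ^ (8 * j) = expand 2 two_ne_zero
      ((1 - X) ^ (4 * j) * Polynomial.aeval (X * gleasonUnit) (gleasonPolynomial j)) := by
  have hp := one_sub_X_mul_inv (K := ℚ)
  have hq := one_add_X_mul_inv (K := ℚ)
  have hz : expand 2 two_ne_zero (X * gleasonUnit) =
      X ^ 2 * (1 + X ^ 2) ^ 2 * ((1 - X)⁻¹ * (1 + X)⁻¹) ^ 4 := by
    simp only [gleasonUnit, map_mul, map_pow, map_add, map_one, expand_X, expand_two_inv_one_sub_X]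
    ring
  rw [map_mul, map_pow, expand_two_one_sub_X, ← Polynomial.aeval_algHom_apply, hz]
  generalize (1 - X : ℚ⟦X⟧)⁻¹ = p at hp ⊢
  generalize (1 + X : ℚ⟦X⟧)⁻¹ = q at hq ⊢
  have hts : ((1 + X) * p) ^ 4 * ((1 - X) * q) ^ 4 = 1 := by
    calc _ = ((1 - X) * p) ^ 4 * ((1 + X) * q) ^ 4 := by ring
      _ = 1 := by rw [hp, hq, one_pow, one_mul]
  have hsum : ((1 + X) * p) ^ 4 + ((1 - X) * q) ^ 4 =
      2 + 64 * (X ^ 2 * (1 + X ^ 2) ^ 2 * (p * q) ^ 4) := by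
    calc _ = ((1 + X) * p) ^ 4 * ((1 + X) * q) ^ 4 + ((1 - X) * q) ^ 4 * ((1 - X) * p) ^ 4 := by
          rw [hp, hq, one_pow, mul_one, mul_one]
      _ = 2 * (((1 - X) * p) ^ 4 * ((1 + X) * q) ^ 4) +
          64 * (X ^ 2 * (1 + X ^ 2) ^ 2 * (p * q) ^ 4) := by ring
      _ = _ := by rw [hp, hq, one_pow, one_mul, mul_one]
  rw [aeval_gleasonPolynomial hts hsum]
  calc (1 + X : ℚ⟦X⟧) ^ (8 * j) + (1 - X) ^ (8 * j)
      = (1 + X) ^ (8 * j) * ((1 - X) * p) ^ (4 * j) +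
          (1 - X) ^ (8 * j) * ((1 + X) * q) ^ (4 * j) := by
        rw [hp, hq, one_pow, mul_one, mul_one]
    _ = ((1 - X) * (1 + X)) ^ (4 * j) * ((((1 + X) * p) ^ 4) ^ j + (((1 - X) * q) ^ 4) ^ j) := by
        generalize (1 - X : ℚ⟦X⟧) = a
        generalize (1 + X : ℚ⟦X⟧) = b
        ring

theorem coeff_inv_one_sub_X_pow_mul_inv_gleasonUnit_pow_pos_odd {k e : ℕ} (hk : 0 < k) :
    0 < coeff (2 * k - 1) ((1 - X : ℚ⟦X⟧)⁻¹ ^ (12 * k + e + 1) * gleasonUnit⁻¹ ^ (2 * k)) := by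
  have hsplit : (1 - X : ℚ⟦X⟧)⁻¹ ^ (12 * k + e + 1) * gleasonUnit⁻¹ ^ (2 * k) =
      expand 2 two_ne_zero ((1 - X)⁻¹ ^ (4 * k - 1 + 1)) * (1 - X)⁻¹ ^ (e + 1) := by
    rw [Nat.sub_add_cancel (by omega), map_pow, expand_two_inv_one_sub_X, inv_gleasonUnit]
    calc (1 - X : ℚ⟦X⟧)⁻¹ ^ (12 * k + e + 1) * ((1 - X) ^ 4 * (1 + X)⁻¹ ^ 2) ^ (2 * k)
        = ((1 - X) * (1 - X)⁻¹) ^ (8 * k) *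
            (((1 - X)⁻¹ * (1 + X)⁻¹) ^ (4 * k) * (1 - X)⁻¹ ^ (e + 1)) := by
          generalize (1 - X : ℚ⟦X⟧) = a
          ring
      _ = _ := by rw [one_sub_X_mul_inv, one_pow, one_mul]
  rw [hsplit]
  exact coeff_expand_mul_pos (i₀ := 0) two_ne_zero (coeff_inv_one_sub_X_pow_succ_pos _)
    (fun _ j _ => (coeff_inv_one_sub_X_pow_succ_pos e j).le) (Nat.zero_add _)
    (coeff_inv_one_sub_X_pow_succ_pos e _)

theorem coeff_inv_one_sub_X_pow_mul_inv_gleasonUnit_pow_pos_even (k : ℕ) {e : ℕ} (he : e ≤ 5) :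
    0 < coeff (2 * k) ((1 - X : ℚ⟦X⟧)⁻¹ ^ (12 * k + e + 1) * gleasonUnit⁻¹ ^ (2 * k + 1)) := by
  obtain ⟨d, hd⟩ := Nat.exists_eq_add_of_le he
  have hsplit : (1 - X : ℚ⟦X⟧)⁻¹ ^ (12 * k + e + 1) * gleasonUnit⁻¹ ^ (2 * k + 1) =
      expand 2 two_ne_zero ((1 - X)⁻¹ ^ (4 * k + 1 + 1)) * (1 - X) ^ d := by
    rw [map_pow, expand_two_inv_one_sub_X, inv_gleasonUnit]
    calc (1 - X : ℚ⟦X⟧)⁻¹ ^ (12 * k + e + 1) * ((1 - X) ^ 4 * (1 + X)⁻¹ ^ 2) ^ (2 * k + 1)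
        = (1 - X)⁻¹ ^ (12 * k + e + 1) * ((1 - X) ^ 4 * (1 + X)⁻¹ ^ 2) ^ (2 * k + 1) *
            ((1 - X) * (1 - X)⁻¹) := by rw [one_sub_X_mul_inv, mul_one]
      _ = (1 - X)⁻¹ ^ (12 * k + e + 2) * (1 - X) ^ (8 * k + 5) * (1 + X)⁻¹ ^ (4 * k + 2) := by
          generalize (1 - X : ℚ⟦X⟧) = a
          ring
      _ = ((1 - X) * (1 - X)⁻¹) ^ (8 * k + e) *
            (((1 - X)⁻¹ * (1 + X)⁻¹) ^ (4 * k + 1 + 1) * (1 - X) ^ d) := by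
          rw [hd]
          generalize (1 - X : ℚ⟦X⟧) = a
          ring
      _ = _ := by rw [one_sub_X_mul_inv, one_pow, one_mul]
  rw [hsplit]
  refine coeff_expand_mul_pos two_ne_zero (coeff_inv_one_sub_X_pow_succ_pos _)
    (fun i j hij => coeff_one_sub_X_pow_nonneg_of_even _ ?_) (Nat.add_zero _) (by simp)
  rw [Nat.even_iff]
  omega

theorem exists_one_add_X_pow_mul_one_sub_X_pow_add_eq_of_le {h M w : ℕ} (hwh : w ≤ h)
    (hmod : w ≡ h [MOD 4]) (hM : h ≤ w + 4 * M) :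
    ∃ P : Polynomial ℚ, P.natDegree ≤ M ∧
      (1 + X : ℚ⟦X⟧) ^ (2 * h - w) * (1 - X) ^ w + (1 + X) ^ w * (1 - X) ^ (2 * h - w) =
        expand 2 two_ne_zero ((1 - X) ^ h * Polynomial.aeval (X * gleasonUnit) P) := by
  obtain ⟨j, hj⟩ := (Nat.modEq_iff_dvd' hwh).mp hmod
  refine ⟨gleasonPolynomial j, (natDegree_gleasonPolynomial_le j).trans (by omega), ?_⟩
  rw [show 2 * h - w = w + 8 * j by omega, show h = w + 4 * j by omega]
  calc (1 + X : ℚ⟦X⟧) ^ (w + 8 * j) * (1 - X) ^ w + (1 + X) ^ w * (1 - X) ^ (w + 8 * j)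
      = ((1 - X) * (1 + X)) ^ w * ((1 + X) ^ (8 * j) + (1 - X) ^ (8 * j)) := by
        generalize (1 - X : ℚ⟦X⟧) = a
        generalize (1 + X : ℚ⟦X⟧) = b
        ring
    _ = _ := by
        rw [one_add_X_pow_add_one_sub_X_pow, ← expand_two_one_sub_X, ← map_pow, ← map_mul,
          ← mul_assoc, ← pow_add]

theorem exists_one_add_X_pow_mul_one_sub_X_pow_add_eq {h M w : ℕ} (hw : w ≤ 2 * h)
    (hmod : w ≡ h [MOD 4]) (hM : h ≤ w + 4 * M) (hM' : w ≤ h + 4 * M) :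
    ∃ P : Polynomial ℚ, P.natDegree ≤ M ∧
      (1 + X : ℚ⟦X⟧) ^ (2 * h - w) * (1 - X) ^ w + (1 + X) ^ w * (1 - X) ^ (2 * h - w) =
        expand 2 two_ne_zero ((1 - X) ^ h * Polynomial.aeval (X * gleasonUnit) P) := by
  rcases le_total w h with hwh | hhw
  · exact exists_one_add_X_pow_mul_one_sub_X_pow_add_eq_of_le hwh hmod hM
  · have hmod' : 2 * h - w ≡ h [MOD 4] := by
      unfold Nat.ModEq at *
      omega
    obtain ⟨P, hP, hsum⟩ := exists_one_add_X_pow_mul_one_sub_X_pow_add_eq_of_le (M := M)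
      (show 2 * h - w ≤ h by omega) hmod' (by omega)
    rw [Nat.sub_sub_self hw, add_comm] at hsum
    exact ⟨P, hP, hsum⟩

end GleasonExpansion

section BinaryVectors

variable {ι : Type*}

theorem binaryVector_mul_self (x : ι → ZMod 2) : x * x = x :=
  funext fun i => ZMod.pow_card (p := 2) (x i) ▸ (sq (x i)).symm

variable [Fintype ι]

theorem hWt_eq_zero {x : ι → ZMod 2} : hWt x = 0 ↔ x = 0 :=
  hammingNorm_eq_zero

theorem hWt_le_card (x : ι → ZMod 2) : hWt x ≤ Fintype.card ι :=
  hammingNorm_le_card_fintype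

theorem hWt_one : hWt (1 : ι → ZMod 2) = Fintype.card ι := by
  simp [hWt]

theorem hWt_add (x y : ι → ZMod 2) : hWt (x + y) + 2 * hWt (x * y) = hWt x + hWt y := by
  simp only [hWt, Finset.card_filter, Finset.mul_sum, ← Finset.sum_add_distrib, Pi.add_apply,
    Pi.mul_apply]
  refine Finset.sum_congr rfl fun i _ => ?_
  generalize x i = a
  generalize y i = b
  decide +revert

theorem hWt_add_one (x : ι → ZMod 2) : hWt (x + 1) = Fintype.card ι - hWt x := by
  have h := hWt_add x 1
  rw [mul_one, hWt_one] at h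
  omega

theorem sum_mul_eq_hWt_mul (x y : ι → ZMod 2) : ∑ i, x i * y i = (hWt (x * y) : ZMod 2) := by
  rw [hWt, Finset.card_filter, Nat.cast_sum]
  refine Finset.sum_congr rfl fun i _ => ?_
  rw [Pi.mul_apply]
  generalize x i * y i = a
  decide +revert

theorem mem_dual2_iff {S : Set (ι → ZMod 2)} {v : ι → ZMod 2} :
    v ∈ dual2 S ↔ ∀ x ∈ S, Even (hWt (x * v)) := by
  simp only [dual2, Set.mem_ofPred_eq, sum_mul_eq_hWt_mul, ZMod.natCast_eq_zero_iff_even,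
    mul_comm v]

theorem pow_mul_pow_eq_prod_ite {A : Type*} [CommMonoid A] (a b : A) (x : ι → ZMod 2) :
    a ^ (Fintype.card ι - hWt x) * b ^ hWt x = ∏ i, if x i ≠ 0 then b else a := by
  have hcard := Finset.card_filter_add_card_filter_not (s := univ) fun i => x i ≠ 0
  rw [Finset.card_univ] at hcard
  rw [Finset.prod_ite, Finset.prod_const, Finset.prod_const, mul_comm, hWt, ← hcard,
    Nat.add_sub_cancel_left]

theorem sum_neg_one_pow_mul_pow_mul_pow [DecidableEq ι] {A : Type*} [CommRing A] (a b : A)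
    (x : ι → ZMod 2) :
    ∑ v : ι → ZMod 2, (-1) ^ hWt (x * v) * (a ^ (Fintype.card ι - hWt v) * b ^ hWt v) =
      (a + b) ^ (Fintype.card ι - hWt x) * (a - b) ^ hWt x := by
  let c (i : ι) (j : ZMod 2) : A := if j ≠ 0 then if x i ≠ 0 then -b else b else a
  have hterm (v : ι → ZMod 2) :
      (-1) ^ hWt (x * v) * (a ^ (Fintype.card ι - hWt v) * b ^ hWt v) = ∏ i, c i (v i) := by
    rw [pow_mul_pow_eq_prod_ite, ← one_mul ((-1) ^ _), ← one_pow (Fintype.card ι - hWt (x * v)),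
      pow_mul_pow_eq_prod_ite, ← Finset.prod_mul_distrib]
    refine Finset.prod_congr rfl fun i _ => ?_
    by_cases hx : x i = 0 <;> by_cases hv : v i = 0 <;> simp [c, hx, hv]
  have hfactor (i : ι) : ∑ j, c i j = if x i ≠ 0 then a - b else a + b := by
    rw [show ∑ j, c i j = c i 0 + c i 1 from Fin.sum_univ_two (c i)]
    by_cases hx : x i = 0 <;> simp [c, hx, sub_eq_add_neg]
  rw [pow_mul_pow_eq_prod_ite, Finset.sum_congr rfl fun v _ => hterm v,
    ← Finset.prod_congr rfl fun i _ => hfactor i, Finset.prod_univ_sum, Fintype.piFinset_univ]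

theorem minHam_eq_of_exists_of_forall_le {S : Set (ι → ZMod 2)} {d : ℕ}
    (hd : ∃ x ∈ S, x ≠ 0 ∧ hWt x = d)
    (hle : ∀ x ∈ S, x ≠ 0 → d ≤ hWt x) : minHam S = d :=
  IsLeast.csInf_eq ⟨hd, by rintro _ ⟨x, hx, h0, rfl⟩; exact hle x hx h0⟩

end BinaryVectors

section ParityVectors

variable {ι : Type*} [Fintype ι] {D : Submodule (ZMod 2) (ι → ZMod 2)}

theorem SelfDual2.mem_iff (hD : SelfDual2 D) {v : ι → ZMod 2} :
    v ∈ D ↔ ∀ x ∈ D, Even (hWt (x * v)) :=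
  (Set.ext_iff.mp hD v).trans mem_dual2_iff

theorem SelfDual2.even_hWt_mul (hD : SelfDual2 D) {x y : ι → ZMod 2} (hx : x ∈ D) (hy : y ∈ D) :
    Even (hWt (x * y)) :=
  hD.mem_iff.mp hy x hx

theorem SelfDual2.even_hWt (hD : SelfDual2 D) {x : ι → ZMod 2} (hx : x ∈ D) : Even (hWt x) :=
  binaryVector_mul_self x ▸ hD.even_hWt_mul hx hx

theorem SelfDual2.one_mem (hD : SelfDual2 D) : (1 : ι → ZMod 2) ∈ D :=
  hD.mem_iff.mpr fun x hx => (mul_one x).symm ▸ hD.even_hWt hx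

/-- The vectors `v` with `wt x ≡ 2 * (x · v) [MOD 4]` for all codewords `x` of `D`. For a singly
even self-dual code this is its shadow, for a doubly even one it is the code itself. -/
def parityVectors (D : Submodule (ZMod 2) (ι → ZMod 2)) : Set (ι → ZMod 2) :=
  {v | ∀ x ∈ D, 4 ∣ hWt x + 2 * hWt (x * v)}

theorem zero_mem_parityVectors_iff : 0 ∈ parityVectors D ↔ DoublyEven (D : Set (ι → ZMod 2)) := by
  simp [parityVectors, DoublyEven, hWt_eq_zero.mpr]

theorem add_one_mem_parityVectors (hD : SelfDual2 D) {v : ι → ZMod 2} (hv : v ∈ parityVectors D) :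
    v + 1 ∈ parityVectors D := by
  intro x hx
  obtain ⟨m, hm⟩ := hD.even_hWt hx
  have hadd := hWt_add (x * v) x
  rw [mul_right_comm, binaryVector_mul_self] at hadd
  have := hv x hx
  rw [mul_add, mul_one]
  omega

theorem add_mem_of_mem_parityVectors (hD : SelfDual2 D) {v w : ι → ZMod 2}
    (hv : v ∈ parityVectors D) (hw : w ∈ parityVectors D) : v + w ∈ D := by
  refine hD.mem_iff.mpr fun x hx => ?_
  obtain ⟨m, hm⟩ := hD.even_hWt hx
  have hadd := hWt_add (x * v) (x * w)
  have hvx := hv x hx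
  have hwx := hw x hx
  rw [mul_add, Nat.even_iff]
  omega

theorem hWt_modEq_of_mem_parityVectors (hD : SelfDual2 D) {v w : ι → ZMod 2}
    (hv : v ∈ parityVectors D) (hw : w ∈ parityVectors D) : hWt v ≡ hWt w [MOD 4] := by
  have hsum := hv _ (add_mem_of_mem_parityVectors hD hv hw)
  have hadd := hWt_add (v + w) v
  rw [add_right_comm, ZModModule.add_self, zero_add] at hadd
  unfold Nat.ModEq
  omega

theorem even_hWt_mul_of_mem_parityVectors {v x : ι → ZMod 2} (hv : v ∈ parityVectors D)
    (hx : x ∈ D) (h4 : 4 ∣ hWt x) : Even (hWt (x * v)) := by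
  have := hv x hx
  rw [Nat.even_iff]
  omega

theorem SelfDual2.exists_not_four_dvd_of_mem_shadow (hD : SelfDual2 D) {v : ι → ZMod 2}
    (hv : v ∈ shadow (D : Set (ι → ZMod 2))) :
    ∃ z ∈ D, ¬ 4 ∣ hWt z ∧ ¬ Even (hWt (z * v)) := by
  obtain ⟨hdual, hnot⟩ := hv
  rw [SetLike.mem_coe, hD.mem_iff] at hnot
  push Not at hnot
  obtain ⟨z, hz, hzv⟩ := hnot
  exact ⟨z, hz, fun h4 => hzv (mem_dual2_iff.mp hdual z ⟨hz, h4⟩), hzv⟩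

theorem shadow_subset_parityVectors (hD : SelfDual2 D) :
    shadow (D : Set (ι → ZMod 2)) ⊆ parityVectors D := by
  intro v hv x hx
  obtain ⟨z, hz, hz4, hzv⟩ := hD.exists_not_four_dvd_of_mem_shadow hv
  have hdual := mem_dual2_iff.mp hv.1
  obtain ⟨m, hm⟩ := hD.even_hWt hx
  obtain ⟨l, hl⟩ := hD.even_hWt hz
  rw [Nat.even_iff] at hzv
  by_cases hx4 : 4 ∣ hWt x
  · obtain ⟨r, hr⟩ := hdual x ⟨hx, hx4⟩
    omega
  · have hadd := hWt_add x z
    obtain ⟨s, hs⟩ := hD.even_hWt_mul hx hz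
    obtain ⟨r, hr⟩ := hdual (x + z) ⟨D.add_mem hx hz, by omega⟩
    have haddv := hWt_add (x * v) (z * v)
    rw [← add_mul] at haddv
    omega

theorem shadow_eq_parityVectors (hD : SelfDual2 D) (hs : SinglyEven (D : Set (ι → ZMod 2))) :
    shadow (D : Set (ι → ZMod 2)) = parityVectors D := by
  refine (shadow_subset_parityVectors hD).antisymm fun v hv => ⟨?_, fun hvD => ?_⟩
  · exact mem_dual2_iff.mpr fun x hx => even_hWt_mul_of_mem_parityVectors hv hx.1 hx.2
  · obtain ⟨x, hx, hx4⟩ := hs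
    obtain ⟨r, hr⟩ := hD.even_hWt_mul hx hvD
    have := hv x hx
    omega

/-- The character `x ↦ (-1) ^ (wt x / 2 + x · v)` of a self-dual code `D`; it is trivial exactly
when `v` is a parity vector of `D`. -/
def parityChar (hD : SelfDual2 D) (v : ι → ZMod 2) : AddChar D ℤ where
  toFun x := (-1) ^ (hWt (x : ι → ZMod 2) / 2 + hWt ((x : ι → ZMod 2) * v))
  map_zero_eq_one' := by simp [hWt_eq_zero.mpr]
  map_add_eq_mul' x y := by
    rw [← pow_add]
    refine neg_one_pow_congr ?_
    have hadd := hWt_add (x : ι → ZMod 2) y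
    have haddv := hWt_add ((x : ι → ZMod 2) * v) (y * v)
    rw [← add_mul] at haddv
    obtain ⟨m, hm⟩ := hD.even_hWt x.2
    obtain ⟨l, hl⟩ := hD.even_hWt y.2
    obtain ⟨s, hs⟩ := hD.even_hWt_mul x.2 y.2
    rw [Submodule.coe_add, Nat.even_iff, Nat.even_iff]
    omega

theorem parityChar_apply (hD : SelfDual2 D) (v : ι → ZMod 2) (x : D) :
    parityChar hD v x = (-1) ^ (hWt (x : ι → ZMod 2) / 2) * (-1) ^ hWt ((x : ι → ZMod 2) * v) :=
  pow_add _ _ _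

theorem parityChar_eq_zero_iff (hD : SelfDual2 D) {v : ι → ZMod 2} :
    parityChar hD v = 0 ↔ v ∈ parityVectors D := by
  rw [AddChar.eq_zero_iff, parityVectors, Set.mem_ofPred_eq, Subtype.forall]
  refine forall₂_congr fun x hx => ?_
  obtain ⟨m, hm⟩ := hD.even_hWt hx
  rw [parityChar_apply, ← pow_add, neg_one_pow_eq_one_iff_even (by decide), Nat.even_iff]
  dsimp only
  omega

open scoped Classical in
theorem card_mul_sum_parityVectors (hD : SelfDual2 D) {A : Type*} [CommRing A] (a b : A) :
    (Fintype.card D : A) *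
        ∑ v with v ∈ parityVectors D, a ^ (Fintype.card ι - hWt v) * b ^ hWt v =
      ∑ x : D, (-1) ^ (hWt (x : ι → ZMod 2) / 2) *
        ((a + b) ^ (Fintype.card ι - hWt (x : ι → ZMod 2)) * (a - b) ^ hWt (x : ι → ZMod 2)) := by
  have hchar (v : ι → ZMod 2) : ∑ x : D, ((parityChar hD v x : ℤ) : A) =
      if v ∈ parityVectors D then (Fintype.card D : A) else 0 := by
    simp only [← Int.cast_sum, AddChar.sum_eq_ite, parityChar_eq_zero_iff, Int.cast_ite,
      Int.cast_natCast, Int.cast_zero]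
  simp_rw [← sum_neg_one_pow_mul_pow_mul_pow, Finset.mul_sum, Finset.sum_filter]
  rw [Finset.sum_comm]
  refine Finset.sum_congr rfl fun v _ => ?_
  simp_rw [← mul_assoc ((-1) ^ _ : A), ← Finset.sum_mul]
  have hsum := hchar v
  simp_rw [parityChar_apply, Int.cast_mul, Int.cast_pow, Int.cast_neg, Int.cast_one] at hsum
  rw [hsum, ite_zero_mul, ite_zero_mul, mul_assoc]

open scoped Classical in
theorem sum_I_pow_hWt_parityVectors (hD : SelfDual2 D) :
    ∑ v with v ∈ parityVectors D, Complex.I ^ hWt v = (1 + Complex.I) ^ Fintype.card ι := by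
  have hterm (x : D) : (-1) ^ (hWt (x : ι → ZMod 2) / 2) *
      ((1 + Complex.I) ^ (Fintype.card ι - hWt (x : ι → ZMod 2)) *
        (1 - Complex.I) ^ hWt (x : ι → ZMod 2)) = (1 + Complex.I) ^ Fintype.card ι := by
    obtain ⟨m, hm⟩ := (hD.even_hWt x.2).two_dvd
    have hsq : -(1 - Complex.I) ^ 2 = (1 + Complex.I) ^ 2 := by
      linear_combination -2 * Complex.I_sq
    rw [mul_left_comm, hm, Nat.mul_div_cancel_left m two_pos, pow_mul (1 - _), ← mul_pow,
      neg_one_mul, hsq, ← pow_mul, ← hm, pow_sub_mul_pow _ (hWt_le_card _)]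
  have hmac := card_mul_sum_parityVectors hD 1 Complex.I
  rw [Finset.sum_congr rfl fun x _ => hterm x, Finset.sum_const, Finset.card_univ,
    nsmul_eq_mul] at hmac
  simpa only [one_pow, one_mul] using
    mul_left_cancel₀ (Nat.cast_ne_zero.mpr Fintype.card_ne_zero) hmac

theorem hWt_modEq_half_card (hD : SelfDual2 D) {h : ℕ} (hcard : Fintype.card ι = 2 * h)
    {v : ι → ZMod 2} (hv : v ∈ parityVectors D) : hWt v ≡ h [MOD 4] := by
  classical
  have hI_modEq {a b : ℕ} (hab : a ≡ b [MOD 4]) : Complex.I ^ a = Complex.I ^ b := by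
    rw [Complex.I_pow_eq_pow_mod, hab, ← Complex.I_pow_eq_pow_mod]
  have hsum := sum_I_pow_hWt_parityVectors hD
  have hone_add : (1 + Complex.I) ^ 2 = 2 * Complex.I := by linear_combination Complex.I_sq
  rw [Finset.sum_congr rfl fun w hw => hI_modEq (hWt_modEq_of_mem_parityVectors hD
    (Finset.mem_filter.mp hw).2 hv), Finset.sum_const, nsmul_eq_mul, hcard, pow_mul, hone_add,
    mul_pow] at hsum
  have hnorm := congrArg norm hsum
  simp only [norm_mul, norm_pow, Complex.norm_I, one_pow, mul_one, Complex.norm_natCast,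
    Complex.norm_ofNat] at hnorm
  have hpow : Complex.I ^ hWt v = Complex.I ^ h := by
    refine mul_left_cancel₀ (pow_ne_zero h (two_ne_zero (α := ℂ))) ?_
    rw [← hsum, ← Complex.ofReal_ofNat, ← Complex.ofReal_pow, ← hnorm, Complex.ofReal_natCast]
  rw [Complex.I_pow_eq_pow_mod, Complex.I_pow_eq_pow_mod h] at hpow
  exact Complex.isPrimitiveRoot_I.pow_inj (Nat.mod_lt _ four_pos) (Nat.mod_lt _ four_pos) hpow

theorem singlyEven_of_not_eight_dvd_card (hD : SelfDual2 D) (h8 : ¬ 8 ∣ Fintype.card ι) :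
    SinglyEven (D : Set (ι → ZMod 2)) := by
  by_contra hne
  have hde : DoublyEven (D : Set (ι → ZMod 2)) := by simpa [SinglyEven, DoublyEven] using hne
  obtain ⟨h, hh⟩ := (hD.even_hWt hD.one_mem).two_dvd
  rw [hWt_one] at hh
  have hmod := hWt_modEq_half_card hD hh (zero_mem_parityVectors_iff.mpr hde)
  rw [hWt_eq_zero.mpr rfl] at hmod
  unfold Nat.ModEq at hmod
  omega

end ParityVectors

section SignedEnumerator

open PowerSeries

variable {ι : Type*} [Fintype ι] {D : Submodule (ZMod 2) (ι → ZMod 2)}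

open scoped Classical in
/-- The weight enumerator `∑ y ^ wt x` of a code with even weights, as a power series in
`X = -y ^ 2`. -/
noncomputable def signedEnumerator (D : Submodule (ZMod 2) (ι → ZMod 2)) : ℚ⟦X⟧ :=
  ∑ x : D, (-X) ^ (hWt (x : ι → ZMod 2) / 2)

open scoped Classical in
theorem card_mul_sum_parityVectors_eq_expand_signedEnumerator (hD : SelfDual2 D) :
    (Fintype.card D : ℚ⟦X⟧) *
        ∑ v with v ∈ parityVectors D, (1 + X) ^ (Fintype.card ι - hWt v) * (1 - X) ^ hWt v =
      2 ^ Fintype.card ι * expand 2 two_ne_zero (signedEnumerator D) := by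
  rw [card_mul_sum_parityVectors hD, signedEnumerator, map_sum, Finset.mul_sum]
  refine Finset.sum_congr rfl fun x _ => ?_
  obtain ⟨m, hm⟩ := (hD.even_hWt x.2).two_dvd
  have hle := hWt_le_card (x : ι → ZMod 2)
  rw [hm] at hle
  rw [hm, Nat.mul_div_cancel_left m two_pos, map_pow, map_neg, expand_X, neg_pow (X ^ 2) m,
    show (1 + X + (1 - X) : ℚ⟦X⟧) = 2 by ring, show (1 + X - (1 - X) : ℚ⟦X⟧) = 2 * X by ring,
    mul_pow, ← mul_assoc (2 ^ _), pow_sub_mul_pow _ hle, pow_mul]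
  ring

open scoped Classical in
theorem two_mul_sum_parityVectors (hD : SelfDual2 D) {A : Type*} [CommSemiring A] (a b : A) :
    2 * ∑ v with v ∈ parityVectors D, a ^ (Fintype.card ι - hWt v) * b ^ hWt v =
      ∑ v with v ∈ parityVectors D, (a ^ (Fintype.card ι - hWt v) * b ^ hWt v +
        a ^ hWt v * b ^ (Fintype.card ι - hWt v)) := by
  have hinv (v : ι → ZMod 2) : v + 1 + 1 = v := by
    rw [add_assoc, ZModModule.add_self, add_zero]
  have hmaps (v) (hv : v ∈ univ.filter (· ∈ parityVectors D)) :
      v + 1 ∈ univ.filter (· ∈ parityVectors D) :=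
    Finset.mem_filter.mpr ⟨mem_univ _, add_one_mem_parityVectors hD (Finset.mem_filter.mp hv).2⟩
  rw [two_mul, Finset.sum_add_distrib]
  congr 1
  refine Finset.sum_nbij' (· + 1) (· + 1) hmaps hmaps (fun v _ => hinv v) (fun v _ => hinv v)
    fun v _ => ?_
  rw [hWt_add_one, Nat.sub_sub_self (hWt_le_card v)]

open scoped Classical in
theorem two_pow_mul_expand_signedEnumerator (hD : SelfDual2 D) :
    2 ^ (Fintype.card ι + 1) * expand 2 two_ne_zero (signedEnumerator D) =
      (Fintype.card D : ℚ⟦X⟧) * ∑ v with v ∈ parityVectors D,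
        ((1 + X) ^ (Fintype.card ι - hWt v) * (1 - X) ^ hWt v +
          (1 + X) ^ hWt v * (1 - X) ^ (Fintype.card ι - hWt v)) := by
  rw [pow_succ', mul_assoc, ← card_mul_sum_parityVectors_eq_expand_signedEnumerator hD,
    mul_left_comm, two_mul_sum_parityVectors hD]

theorem exists_signedEnumerator_eq (hD : SelfDual2 D) {h M : ℕ} (hcard : Fintype.card ι = 2 * h)
    (hT : ∀ v ∈ parityVectors D, h ≤ hWt v + 4 * M) :
    ∃ P : Polynomial ℚ, P.natDegree ≤ M ∧
      signedEnumerator D = (1 - X) ^ h * Polynomial.aeval (X * gleasonUnit) P := by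
  classical
  have hP (v) (hv : v ∈ parityVectors D) := exists_one_add_X_pow_mul_one_sub_X_pow_add_eq
    (hcard ▸ hWt_le_card v) (hWt_modEq_half_card hD hcard hv) (hT v hv) (by
      have hle := hWt_le_card v
      have hcompl := hT _ (add_one_mem_parityVectors hD hv)
      rw [hWt_add_one] at hcompl
      omega)
  choose! P hdeg hP using hP
  let Q := ∑ v with v ∈ parityVectors D, P v
  refine ⟨Polynomial.C ((Fintype.card D : ℚ) / 2 ^ (2 * h + 1)) * Q, ?_, ?_⟩
  · exact (Polynomial.natDegree_C_mul_le _ _).trans (Polynomial.natDegree_sum_le_of_forall_le _ _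
      fun v hv => hdeg v (Finset.mem_filter.mp hv).2)
  have hmul : 2 ^ (2 * h + 1) * signedEnumerator D =
      (Fintype.card D : ℚ⟦X⟧) * ((1 - X) ^ h * Polynomial.aeval (X * gleasonUnit) Q) := by
    apply expand_injective two_ne_zero
    calc expand 2 two_ne_zero (2 ^ (2 * h + 1) * signedEnumerator D)
        = (Fintype.card D : ℚ⟦X⟧) * ∑ v with v ∈ parityVectors D,
            expand 2 two_ne_zero ((1 - X) ^ h * Polynomial.aeval (X * gleasonUnit) (P v)) := by
          rw [map_mul, map_pow, map_ofNat, ← hcard, two_pow_mul_expand_signedEnumerator hD, hcard]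
          exact congrArg _ (Finset.sum_congr rfl fun v hv => hP v (Finset.mem_filter.mp hv).2)
      _ = _ := by
          rw [← map_sum, ← Finset.mul_sum, ← map_sum, map_mul _ (Fintype.card D : ℚ⟦X⟧),
            map_natCast]
  have hscalar : 2 ^ (2 * h + 1) * algebraMap ℚ ℚ⟦X⟧ ((Fintype.card D : ℚ) / 2 ^ (2 * h + 1)) =
      (Fintype.card D : ℚ⟦X⟧) := by
    rw [← map_ofNat (algebraMap ℚ ℚ⟦X⟧), ← map_pow, ← map_mul, mul_div_cancel₀ _ (by positivity),
      map_natCast]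
  have := algebraRat.charZero ℚ⟦X⟧
  refine mul_left_cancel₀ (pow_ne_zero (2 * h + 1) (two_ne_zero (α := ℚ⟦X⟧))) ?_
  rw [hmul, map_mul, Polynomial.aeval_C]
  linear_combination -(1 - X) ^ h * Polynomial.aeval (X * gleasonUnit) Q * hscalar

theorem X_pow_dvd_signedEnumerator_sub_one {m : ℕ} (hmin : ∀ x ∈ D, x ≠ 0 → 2 * m ≤ hWt x) :
    X ^ m ∣ signedEnumerator D - 1 := by
  classical
  have hzero : (-X : ℚ⟦X⟧) ^ (hWt ((0 : D) : ι → ZMod 2) / 2) = 1 := by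
    simp [hWt_eq_zero.mpr]
  rw [signedEnumerator, ← Finset.add_sum_erase _ _ (mem_univ 0), hzero, add_sub_cancel_left]
  refine Finset.dvd_sum fun x hx => ?_
  rw [neg_pow]
  refine dvd_mul_of_dvd_right (pow_dvd_pow X ?_) _
  have := hmin x x.2 (mt Submodule.coe_eq_zero.mp (Finset.ne_of_mem_erase hx))
  omega

theorem coeff_inv_one_sub_X_pow_mul_inv_gleasonUnit_pow_eq_zero (hD : SelfDual2 D) {h M : ℕ}
    (hh : h ≠ 0) (hcard : Fintype.card ι = 2 * h)
    (hT : ∀ v ∈ parityVectors D, h ≤ hWt v + 4 * M)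
    (hmin : ∀ x ∈ D, x ≠ 0 → 2 * (M + 2) ≤ hWt x) :
    coeff M ((1 - X : ℚ⟦X⟧)⁻¹ ^ (h + 1) * gleasonUnit⁻¹ ^ (M + 1)) = 0 := by
  obtain ⟨P, hdeg, hP⟩ := exists_signedEnumerator_eq hD hcard hT
  have hdvd : X ^ (M + 2) ∣ Polynomial.aeval (X * gleasonUnit) P - (1 - X : ℚ⟦X⟧)⁻¹ ^ h := by
    have haeval : Polynomial.aeval (X * gleasonUnit) P - (1 - X : ℚ⟦X⟧)⁻¹ ^ h =
        (1 - X)⁻¹ ^ h * (signedEnumerator D - 1) := by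
      rw [hP, mul_sub, ← mul_assoc, ← mul_pow, mul_comm (1 - X)⁻¹, one_sub_X_mul_inv, one_pow,
        one_mul, mul_one]
    exact haeval ▸ dvd_mul_of_dvd_right (X_pow_dvd_signedEnumerator_sub_one hmin) _
  have hcoeff := coeff_derivative_mul_inv_pow_of_dvd_aeval_sub
    (PowerSeries.mul_inv_cancel gleasonUnit (by simp [gleasonUnit])) hdeg hdvd
  rw [derivative_inv_one_sub_X_pow, smul_mul_assoc, map_nsmul] at hcoeff
  exact (nsmul_eq_zero_iff_right hh).mp hcoeff

end SignedEnumerator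

section ResidueCode

variable {ι : Type*} [Fintype ι] {C : Submodule (ZMod 4) (ι → ZMod 4)}
  {D : Submodule (ZMod 2) (ι → ZMod 2)} {v : ι → ZMod 2}

theorem dual2_anti {S T : Set (ι → ZMod 2)} (hST : S ⊆ T) : dual2 T ⊆ dual2 S :=
  fun _ hv y hy => hv y (hST hy)

theorem natCast_hWt_res2 (c : ι → ZMod 4) : (hWt (res2 c) : ZMod 4) = ∑ i, c i * c i := by
  have hcoord : ∀ a : ZMod 4, ((if ZMod.castHom (by norm_num : (2 : ℕ) ∣ 4) (ZMod 2) a ≠ 0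
      then 1 else 0 : ℕ) : ZMod 4) = a * a := by decide
  simp only [hWt, Finset.card_filter, Nat.cast_sum]
  exact Finset.sum_congr rfl fun i _ => hcoord (c i)

theorem SelfDualZ4.doublyEven_residue (hC : SelfDualZ4 C) :
    DoublyEven (residue (C : Set (ι → ZMod 4))) := by
  rintro _ ⟨c, hc, rfl⟩
  rw [← ZMod.natCast_eq_zero_iff, natCast_hWt_res2]
  exact (hC ▸ hc : c ∈ dualZ4 (C : Set (ι → ZMod 4))) c hc

/-- The vector `2 * v` over `ZMod 4`, for a binary vector `v`. -/
def twoLift {ι : Type*} (v : ι → ZMod 2) : ι → ZMod 4 :=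
  fun i => if v i = 0 then 0 else 2

theorem twoLift_ne_zero {ι : Type*} {v : ι → ZMod 2} (hv : v ≠ 0) : twoLift v ≠ 0 := by
  obtain ⟨i, hi⟩ := Function.ne_iff.mp hv
  exact Function.ne_iff.mpr ⟨i, (if_neg hi).trans_ne (show (2 : ZMod 4) ≠ 0 by decide)⟩

theorem leeWt_twoLift (v : ι → ZMod 2) : leeWt (twoLift v) = 2 * hWt v := by
  simp only [leeWt, twoLift, hWt, Finset.card_filter, Finset.mul_sum]
  refine Finset.sum_congr rfl fun i _ => ?_
  generalize v i = a
  decide +revert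

theorem sum_twoLift_mul (v : ι → ZMod 2) (c : ι → ZMod 4) :
    ∑ i, twoLift v i * c i = ((2 * hWt (res2 c * v) : ℕ) : ZMod 4) := by
  have hcoord : ∀ (a : ZMod 2) (b : ZMod 4), (if a = 0 then 0 else 2) * b =
      ((2 * if ZMod.castHom (by norm_num : (2 : ℕ) ∣ 4) (ZMod 2) b * a ≠ 0 then 1 else 0 : ℕ) :
        ZMod 4) := by decide
  simp only [hWt, Finset.card_filter, Finset.mul_sum, Nat.cast_sum]
  exact Finset.sum_congr rfl fun i _ => hcoord (v i) (c i)

theorem twoLift_mem_dualZ4 {S : Set (ι → ZMod 4)} (hv : v ∈ dual2 (residue S)) :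
    twoLift v ∈ dualZ4 S := by
  intro c hc
  rw [sum_twoLift_mul, ZMod.natCast_eq_zero_iff]
  exact Nat.mul_dvd_mul_left 2 (mem_dual2_iff.mp hv _ ⟨c, hc, rfl⟩).two_dvd

theorem SelfDualZ4.minLee_le_two_mul_hWt (hC : SelfDualZ4 C)
    (hv : v ∈ dual2 (residue (C : Set (ι → ZMod 4)))) (hv0 : v ≠ 0) :
    minLee (C : Set (ι → ZMod 4)) ≤ 2 * hWt v :=
  Nat.sInf_le ⟨twoLift v, hC ▸ twoLift_mem_dualZ4 hv, twoLift_ne_zero hv0, leeWt_twoLift v⟩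

theorem SelfDual2.subset_dual2_of_subset (hD : SelfDual2 D) {S : Set (ι → ZMod 2)}
    (hS : S ⊆ D) : (D : Set (ι → ZMod 2)) ⊆ dual2 S :=
  hD.subset.trans (dual2_anti hS)

theorem shadow_subset_dual2_of_doublyEven {S : Set (ι → ZMod 2)} (hde : DoublyEven S)
    (hS : S ⊆ D) : shadow (D : Set (ι → ZMod 2)) ⊆ dual2 S :=
  Set.sdiff_subset.trans (dual2_anti fun x hx => ⟨hS hx, hde x hx⟩)

theorem ne_zero_of_mem_shadow (hv : v ∈ shadow (D : Set (ι → ZMod 2))) : v ≠ 0 := by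
  rintro rfl
  exact hv.2 D.zero_mem

end ResidueCode

section ExtremalCriterion

variable {ι : Type*} [Fintype ι] {D : Submodule (ZMod 2) (ι → ZMod 2)} {k e : ℕ}

theorem exists_mem_hWt_eq (hD : SelfDual2 D) (hk : 0 < k) (he : e ≤ 5)
    (hcard : Fintype.card ι = 2 * (12 * k + e)) (hmin : ∀ x ∈ D, x ≠ 0 → 4 * k + 2 ≤ hWt x)
    (hT : ∀ v ∈ parityVectors D, 4 * k + e ≤ hWt v) : ∃ x ∈ D, x ≠ 0 ∧ hWt x = 4 * k + 2 := by
  by_contra! hne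
  refine (coeff_inv_one_sub_X_pow_mul_inv_gleasonUnit_pow_pos_even k he).ne' <|
    coeff_inv_one_sub_X_pow_mul_inv_gleasonUnit_pow_eq_zero hD (by omega) hcard
      (fun v hv => ?_) fun x hx hx0 => ?_
  · have := hT v hv
    omega
  · obtain ⟨m, hm⟩ := hD.even_hWt hx
    have := hmin x hx hx0
    have := hne x hx hx0
    omega

theorem exists_mem_parityVectors_hWt_eq (hD : SelfDual2 D) (hk : 0 < k)
    (hcard : Fintype.card ι = 2 * (12 * k + e)) (hmin : ∀ x ∈ D, x ≠ 0 → 4 * k + 2 ≤ hWt x)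
    (hT : ∀ v ∈ parityVectors D, 4 * k + e ≤ hWt v) :
    ∃ v ∈ parityVectors D, hWt v = 4 * k + e := by
  by_contra! hne
  have hpos := coeff_inv_one_sub_X_pow_mul_inv_gleasonUnit_pow_pos_odd (e := e) hk
  have hzero := coeff_inv_one_sub_X_pow_mul_inv_gleasonUnit_pow_eq_zero (M := 2 * k - 1) hD
    (by omega) hcard (fun v hv => ?_) fun x hx hx0 => ?_
  · rw [Nat.sub_add_cancel (by omega)] at hzero
    exact hpos.ne' hzero
  · have hmod := hWt_modEq_half_card hD hcard hv
    have := hT v hv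
    have := hne v hv
    unfold Nat.ModEq at hmod
    omega
  · have := hmin x hx hx0
    omega

theorem sExtremal_and_minHam_eq (hD : SelfDual2 D) (hs : SinglyEven (D : Set (ι → ZMod 2)))
    (hk : 0 < k) (he : e ≤ 5) (hcard : Fintype.card ι = 2 * (12 * k + e))
    (hmin : ∀ x ∈ D, x ≠ 0 → 4 * k + 2 ≤ hWt x)
    (hshadow : ∀ v ∈ shadow (D : Set (ι → ZMod 2)), 4 * k + e ≤ hWt v) :
    SExtremal D ∧ minHam (D : Set (ι → ZMod 2)) = 4 * k + 2 := by
  have hT := hshadow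
  rw [shadow_eq_parityVectors hD hs] at hT
  obtain ⟨v, hv, hvwt⟩ := exists_mem_parityVectors_hWt_eq hD hk hcard hmin hT
  have hd : minHam (D : Set (ι → ZMod 2)) = 4 * k + 2 :=
    minHam_eq_of_exists_of_forall_le (exists_mem_hWt_eq hD hk he hcard hmin hT) hmin
  rw [← shadow_eq_parityVectors hD hs] at hv
  have hds : minHam (shadow (D : Set (ι → ZMod 2))) = 4 * k + e :=
    minHam_eq_of_exists_of_forall_le ⟨v, hv, ne_zero_of_mem_shadow hv, hvwt⟩
      fun w hw _ => hshadow w hw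
  refine ⟨⟨hD, hs, fun _ => ?_, fun hexceptional => ?_⟩, hd⟩ <;> omega

/- `hlee` only has to keep the shadow above weight `4 * k + a / 2 - 4`, since all its weights are
congruent to `4 * k + a / 2` modulo 4. -/
theorem sextremal_of_residue_subset_case1_general {a : ℕ} (hk : 0 < k) (ha : a ≤ 10)
    (hn : Fintype.card ι = 24 * k + a) {C : Submodule (ZMod 4) (ι → ZMod 4)} (hC : SelfDualZ4 C)
    (hlee₂ : 8 * k + 2 ≤ minLee (C : Set (ι → ZMod 4)))
    (hlee : 8 * k + a < minLee (C : Set (ι → ZMod 4)) + 8) (hD : SelfDual2 D)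
    (hs : SinglyEven (D : Set (ι → ZMod 2)))
    (hres : residue (C : Set (ι → ZMod 4)) ⊆ (D : Set (ι → ZMod 2))) :
    SExtremal D ∧ minHam (D : Set (ι → ZMod 2)) = 4 * k + 2 := by
  obtain ⟨h, hcard⟩ := (hD.even_hWt hD.one_mem).two_dvd
  rw [hWt_one] at hcard
  obtain ⟨e, rfl⟩ := Nat.exists_eq_add_of_le (show 12 * k ≤ h by omega)
  refine sExtremal_and_minHam_eq hD hs hk (by omega) hcard (fun x hx hx0 => ?_) fun v hv => ?_
  · have hle := hC.minLee_le_two_mul_hWt (hD.subset_dual2_of_subset hres hx) hx0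
    obtain ⟨m, hm⟩ := hD.even_hWt hx
    omega
  · have hle := hC.minLee_le_two_mul_hWt
      (shadow_subset_dual2_of_doublyEven hC.doublyEven_residue hres hv) (ne_zero_of_mem_shadow hv)
    have hmod : hWt v % 4 = (12 * k + e) % 4 :=
      hWt_modEq_half_card hD hcard (shadow_subset_parityVectors hD hv)
    omega

end ExtremalCriterion

end Z4Note

open Z4Note in
/-- for `(α,β) ∈ {(2,2),(4,4),(6,4),(10,4)}`, any binary self-dual code
containing the residue code of a self-dual `ZMod 4`-code of length `24k+α` and minimum
Lee weight `8k+β` is s-extremal with minimum weight `4k+2`. -/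
theorem sextremal_of_residue_subset_case1
    (k : ℕ) (hk : 0 < k) (a b : ℕ)
    (hab : (a, b) = (2, 2) ∨ (a, b) = (4, 4) ∨ (a, b) = (6, 4) ∨ (a, b) = (10, 4))
    (C : Submodule (ZMod 4) (Fin (24 * k + a) → ZMod 4))
    (hsd : SelfDualZ4 C)
    (hlee : minLee (C : Set (Fin (24 * k + a) → ZMod 4)) = 8 * k + b) :
    ∀ D : Submodule (ZMod 2) (Fin (24 * k + a) → ZMod 2),
      SelfDual2 D →
      residue (C : Set (Fin (24 * k + a) → ZMod 4)) ⊆ (D : Set (Fin (24 * k + a) → ZMod 2)) →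
      SExtremal D ∧ minHam (D : Set (Fin (24 * k + a) → ZMod 2)) = 4 * k + 2 := by
  intro D hD hres
  have hn := Fintype.card_fin (24 * k + a)
  simp only [Prod.mk.injEq] at hab
  have hs := singlyEven_of_not_eight_dvd_card hD (by omega)
  exact sextremal_of_residue_subset_case1_general hk (by omega) hn hsd (by omega) (by omega) hD hs
    hres
end
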